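/- arXiv:0707.4213 — 2 statements merged into one kernel-verified Lean document; each statement's English description precedes it below -/
import Mathlib

section
/- Let k be a field of characteristic zero, n ≥ 1, A = k[x]/(x^{n+1}), and B = A ⊗_k A. The graded ring HH^*(A;A) = ⊕_{m≥0} Ext^m_B(A,A), with the Yoneda (composition) product, is isomorphic as a graded ring to k[x,u,t]/(x^{n+1}, u², x^n t, u x^n), where x, u, t have cohomological degrees 0, 1, 2 respectively. -/
open Polynomial TensorProduct CategoryTheory

noncomputable section

/-- `A = k[x]/(x^{n+1})`, the truncated polynomial ring over the field `k`. -/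
abbrev A (k : Type) [Field k] (n : ℕ) : Type := AdjoinRoot ((X : k[X]) ^ (n + 1))

/-- `B = A ⊗_k A`. -/
abbrev B (k : Type) [Field k] (n : ℕ) : Type := A k n ⊗[k] A k n

/-- `A` is a `B`-module via the multiplication map `μ(a ⊗ b) = ab`. -/
instance (k : Type) [Field k] (n : ℕ) : Algebra (B k n) (A k n) :=
  (Algebra.TensorProduct.lmul' k (S := A k n)).toRingHom.toAlgebra

instance (k : Type) [Field k] (n : ℕ) : HasDerivedCategory.{1} (ModuleCat.{0} (B k n)) :=
  HasDerivedCategory.standard _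

instance (k : Type) [Field k] (n : ℕ) : HasExt.{1} (ModuleCat.{0} (B k n)) :=
  hasExt_of_hasDerivedCategory _

/-- `A` as an object of the category of `B`-modules. -/
def M (k : Type) [Field k] (n : ℕ) : ModuleCat.{0} (B k n) := ModuleCat.of (B k n) (A k n)

/-- The ideal `(x^{n+1}, u², xⁿt, uxⁿ)` of `k[x,u,t]`, where `x = X 0`, `u = X 1`,
`t = X 2`. -/
def I (k : Type) [Field k] (n : ℕ) : Ideal (MvPolynomial (Fin 3) k) :=
  Ideal.span {MvPolynomial.X 0 ^ (n + 1), MvPolynomial.X 1 ^ 2,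
    MvPolynomial.X 0 ^ n * MvPolynomial.X 2,
    MvPolynomial.X 1 * MvPolynomial.X 0 ^ n}

/-- The ring `k[x,u,t]/(x^{n+1}, u², xⁿt, uxⁿ)`. -/
abbrev R (k : Type) [Field k] (n : ℕ) : Type := MvPolynomial (Fin 3) k ⧸ I k n

/-- The degree-`m` component of `R k n`, for the grading in which `x, u, t` have
cohomological degrees `0, 1, 2` respectively. -/
def G (k : Type) [Field k] (n m : ℕ) : Submodule k (R k n) :=
  (MvPolynomial.weightedHomogeneousSubmodule k (![0, 1, 2] : Fin 3 → ℕ) m).map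
    (Ideal.Quotient.mkₐ k (I k n)).toLinearMap

/-!
Write `δ = 1 ⊗ x - x ⊗ 1` and `N = ∑ xⁿ⁻ⁱ ⊗ xⁱ` in `B`. Lifting to `A[X]`, where
`(X - x) * ∑ Xⁱ xⁿ⁻ⁱ = X ^ (n + 1)`, shows that `δ` and `N` generate each other's annihilators, so
`A = B/(δ)` has a 2-periodic free resolution with differentials `δ` and `N`. Splicing the extensions
`0 ⟶ B/(N) ⟶ B ⟶ B/(δ) ⟶ 0` and `0 ⟶ B/(δ) ⟶ B ⟶ B/(N) ⟶ 0` gives `t` in degree 2, and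
multiplication by `1 ⊗ x` from `B/(N)` to `B/(δ)` gives `u` in degree 1. On `A` the element `δ` acts
as `0` and `N` as `(n + 1) xⁿ`; as `n + 1` is invertible, `Extᵐ` is generated over `k[x]` by
`u^(m % 2) t^(m / 2)`, with annihilator `(xⁿ⁺¹)` for `m = 0` and `(xⁿ)` for `m > 0`. The component
of degree `m` of the presented ring is generated by the same monomial with the same annihilator.

It remains to see that `u² = 0`. If `N (1 ⊗ x) = δ v`, moving `1 ⊗ x` past the extension class turns
it into `v`, so `u² = v (1 ⊗ x) t`. One can take `v = -∑ i xⁿ⁻ⁱ ⊗ xⁱ`, and then `v (1 ⊗ x)` acts on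
`A` as a multiple of `xⁿ⁺¹ = 0`.
-/

open Abelian

universe w u

section CyclicModule

variable {S : Type u} [CommRing S] {a b c s : S}

/-- The cyclic module `S/(a)`. The free module `S` is encoded as `cyclicModule 0`, so that every
map between the modules of a periodic resolution is a `cyclicHom`. -/
abbrev cyclicModule (a : S) : ModuleCat.{u} S := ModuleCat.of S (S ⧸ Ideal.span {a})

/-- Multiplication by `s`, as a homomorphism `S/(a) ⟶ S/(b)`. -/
def cyclicHom (s : S) (hs : b ∣ a * s) : cyclicModule a ⟶ cyclicModule b :=
  ModuleCat.ofHom <| Submodule.mapQ _ _ (LinearMap.mulRight S s) <| by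
    rw [Ideal.span, Submodule.span_le, Set.singleton_subset_iff]
    exact Ideal.mem_span_singleton.2 hs

lemma cyclicHom_mk (hs : b ∣ a * s) (r : S) :
    (cyclicHom s hs).hom (Ideal.Quotient.mk _ r) = Ideal.Quotient.mk _ (r * s) := rfl

lemma cyclicModule_hom_ext {Y : ModuleCat.{u} S} {f g : cyclicModule a ⟶ Y}
    (h : f.hom (Ideal.Quotient.mk _ 1) = g.hom (Ideal.Quotient.mk _ 1)) : f = g := by
  refine ModuleCat.hom_ext (Submodule.linearMap_qext _ (LinearMap.ext_ring ?_))
  exact h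

lemma exists_eq_cyclicHom (f : cyclicModule a ⟶ cyclicModule b) :
    ∃ (s : S) (hs : b ∣ a * s), f = cyclicHom s hs := by
  obtain ⟨s, hs⟩ := Ideal.Quotient.mk_surjective (f.hom (Ideal.Quotient.mk _ 1))
  have hfa : f.hom (a • Ideal.Quotient.mk _ 1) = Ideal.Quotient.mk _ (a * s) := by
    rw [map_smul, ← hs]; rfl
  have ha : a • Ideal.Quotient.mk (Ideal.span {a}) 1 = 0 :=
    Ideal.Quotient.eq_zero_iff_mem.2 (Ideal.mem_span_singleton.2 (dvd_mul_right a 1))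
  refine ⟨s, ?_, cyclicModule_hom_ext ?_⟩
  · rwa [ha, map_zero, eq_comm, Ideal.Quotient.eq_zero_iff_dvd] at hfa
  · rw [← hs, cyclicHom_mk, one_mul]

lemma cyclicHom_eq_iff {t : S} (hs : b ∣ a * s) (ht : b ∣ a * t) :
    cyclicHom s hs = cyclicHom t ht ↔ b ∣ s - t := by
  rw [← Ideal.mem_span_singleton, ← Ideal.Quotient.eq]
  refine ⟨fun h ↦ ?_, fun h ↦ cyclicModule_hom_ext ?_⟩
  · have h1 := congr(($h).hom (Ideal.Quotient.mk _ 1))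
    rwa [cyclicHom_mk, cyclicHom_mk, one_mul, one_mul] at h1
  · rwa [cyclicHom_mk, cyclicHom_mk, one_mul, one_mul]

lemma cyclicHom_comp {t : S} (hs : b ∣ a * s) (ht : c ∣ b * t) :
    cyclicHom s hs ≫ cyclicHom t ht =
      cyclicHom (s * t) (ht.trans (by rw [← mul_assoc]; exact mul_dvd_mul_right hs t)) :=
  cyclicModule_hom_ext congr(Ideal.Quotient.mk _ $(mul_assoc 1 s t))

lemma smul_cyclicHom (r : S) (hs : b ∣ a * s) :
    r • cyclicHom s hs =
      cyclicHom (r * s) (by rw [mul_left_comm]; exact dvd_mul_of_dvd_right hs r) :=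
  cyclicModule_hom_ext congr(Ideal.Quotient.mk _ $(mul_left_comm r 1 s))

lemma cyclicHom_eq_zero_iff (hs : b ∣ a * s) : cyclicHom s hs = 0 ↔ b ∣ s := by
  rw [← zero_smul S (cyclicHom s hs), smul_cyclicHom, cyclicHom_eq_iff, zero_mul, sub_zero]

lemma smul_id_cyclicModule (r : S) :
    r • 𝟙 (cyclicModule a) = cyclicHom r (dvd_mul_right a r) :=
  cyclicModule_hom_ext congr(Ideal.Quotient.mk _ $(by simp))

instance : Projective (cyclicModule (0 : S)) :=
  have : Module.Projective S (S ⧸ Ideal.span {(0 : S)}) :=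
    .of_equiv (Submodule.quotEquivOfEqBot (Ideal.span {(0 : S)}) (by simp)).symm
  (IsProjective.iff_projective _).1 this

variable [HasExt.{w} (ModuleCat.{u} S)]

lemma smul_ext_cyclicModule_eq_zero {Y : ModuleCat.{u} S} {m : ℕ}
    (h : a ∣ s) (α : Ext (cyclicModule a) Y m) : s • α = 0 := by
  rw [← Ext.mk₀_id_comp α, ← Ext.smul_comp, ← Ext.mk₀_smul, smul_id_cyclicModule,
    (cyclicHom_eq_zero_iff _).2 h, Ext.mk₀_zero, Ext.zero_comp]

end CyclicModule

/-! ### Self-extensions of a cyclic module defined by an exact pair -/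

/-- `(a, b)` is an exact pair of zero divisors: the annihilator of each is generated by the
other. -/
structure IsExactPair {S : Type*} [CommRing S] (a b : S) : Prop where
  left_mul_eq_zero_iff {s : S} : a * s = 0 ↔ b ∣ s
  right_mul_eq_zero_iff {s : S} : b * s = 0 ↔ a ∣ s

namespace IsExactPair

section

variable {S : Type u} [CommRing S] {a b a' b' : S}

lemma symm (h : IsExactPair a b) : IsExactPair b a := ⟨h.2, h.1⟩

lemma mul_eq_zero (h : IsExactPair a b) : a * b = 0 := h.left_mul_eq_zero_iff.2 dvd_rfl

lemma of_surjective {P : Type*} [CommRing P] {π : P →+* S} (hπ : Function.Surjective π)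
    {p q : P} (hpq : IsLeftRegular (p * q)) (hker : ∀ f, π f = 0 ↔ p * q ∣ f) :
    IsExactPair (π p) (π q) := by
  have mul_eq_zero_iff {p q : P} (hp : IsLeftRegular p) (hker : ∀ f, π f = 0 ↔ p * q ∣ f)
      {s : S} : π p * s = 0 ↔ π q ∣ s := by
    obtain ⟨f, rfl⟩ := hπ s
    constructor
    · intro hf
      obtain ⟨g, hg⟩ := (hker (p * f)).1 (by rw [map_mul, hf])
      rw [hp (hg.trans (mul_assoc p q g))]
      exact map_dvd π (dvd_mul_right q g)
    · rintro ⟨t, ht⟩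
      rw [ht, ← mul_assoc, ← map_mul, (hker _).2 dvd_rfl, zero_mul]
  have hqp : IsLeftRegular (q * p) := mul_comm p q ▸ hpq
  exact ⟨mul_eq_zero_iff hqp.of_mul hker, mul_eq_zero_iff hpq.of_mul (mul_comm p q ▸ hker)⟩

/-- The extension `0 ⟶ S/(a) ⟶ S ⟶ S/(b) ⟶ 0` of an exact pair, whose first map is
multiplication by `b`. -/
def shortComplex (h : IsExactPair a b) : ShortComplex (ModuleCat.{u} S) where
  X₁ := cyclicModule a
  X₂ := cyclicModule 0
  X₃ := cyclicModule b
  f := cyclicHom b (by rw [h.mul_eq_zero])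
  g := cyclicHom 1 (by rw [zero_mul]; exact dvd_zero b)
  zero := by
    rw [cyclicHom_comp, cyclicHom_eq_zero_iff, mul_one]

lemma shortComplex_shortExact (h : IsExactPair a b) : h.shortComplex.ShortExact where
  exact := by
    rw [ShortComplex.moduleCat_exact_iff]
    intro x hx
    obtain ⟨s, rfl⟩ := Ideal.Quotient.mk_surjective x
    obtain ⟨r, hr⟩ : b ∣ s * 1 := Ideal.Quotient.eq_zero_iff_dvd _ _ |>.1 hx
    refine ⟨Ideal.Quotient.mk _ r, ?_⟩
    have hrs : r * b = s := by rw [mul_comm, ← hr, mul_one]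
    exact congr(Ideal.Quotient.mk (Ideal.span {(0 : S)}) $hrs)
  mono_f := by
    rw [ModuleCat.mono_iff_injective, injective_iff_map_eq_zero]
    intro x hx
    obtain ⟨s, rfl⟩ := Ideal.Quotient.mk_surjective x
    have hsb : 0 ∣ s * b := Ideal.Quotient.eq_zero_iff_dvd _ _ |>.1 hx
    rw [zero_dvd_iff, mul_comm, h.right_mul_eq_zero_iff] at hsb
    exact Ideal.Quotient.eq_zero_iff_dvd _ _ |>.2 hsb
  epi_g := by
    rw [ModuleCat.epi_iff_surjective]
    intro x
    obtain ⟨s, rfl⟩ := Ideal.Quotient.mk_surjective x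
    exact ⟨Ideal.Quotient.mk _ s, congr(Ideal.Quotient.mk _ $(mul_one s))⟩

variable [HasExt.{w} (ModuleCat.{u} S)]

/-- The class in `Ext¹(S/(b), S/(a))` of the extension `0 ⟶ S/(a) ⟶ S ⟶ S/(b) ⟶ 0`. -/
def extClass (h : IsExactPair a b) : Ext (cyclicModule b) (cyclicModule a) 1 :=
  h.shortComplex_shortExact.extClass

lemma extClass_comp_cyclicHom (h : IsExactPair a b) (h' : IsExactPair a' b') {r s : S}
    (hrs : b * s = r * b') (hr : a' ∣ a * r) (hs : b' ∣ b * s) :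
    h.extClass.comp (Ext.mk₀ (cyclicHom r hr)) (add_zero 1) =
      (Ext.mk₀ (cyclicHom s hs)).comp h'.extClass (zero_add 1) :=
  ShortComplex.ShortExact.extClass_naturality h.shortComplex_shortExact
    h'.shortComplex_shortExact
    { τ₁ := cyclicHom r hr
      τ₂ := cyclicHom s (by rw [zero_mul])
      τ₃ := cyclicHom s hs
      comm₁₂ := by
        simp only [shortComplex, cyclicHom_comp, hrs]
      comm₂₃ := by
        simp only [shortComplex, cyclicHom_comp, mul_one, one_mul] }

lemma exists_extClass_comp_eq (h : IsExactPair a b) {Y : ModuleCat.{u} S} {m m' : ℕ}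
    (hm : 1 + m = m') (α : Ext (cyclicModule b) Y m') :
    ∃ β : Ext (cyclicModule a) Y m, h.extClass.comp β hm = α := by
  obtain rfl : m' = m + 1 := by lia
  exact Ext.contravariant_sequence_exact₃ h.shortComplex_shortExact Y α
    (Ext.eq_zero_of_projective (P := cyclicModule (0 : S)) _) hm

lemma exists_mk₀_comp_eq (h : IsExactPair a b) {Y : ModuleCat.{u} S} {m m' : ℕ}
    {hm : 1 + m = m'} {β : Ext (cyclicModule a) Y m} (hβ : h.extClass.comp β hm = 0) :
    ∃ γ : Ext (cyclicModule 0) Y m,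
      (Ext.mk₀ (cyclicHom b (by rw [h.mul_eq_zero]))).comp γ (zero_add m) = β :=
  Ext.contravariant_sequence_exact₁ h.shortComplex_shortExact Y β hm hβ

lemma eq_zero_of_extClass_comp_eq_zero (h : IsExactPair a b) {Y : ModuleCat.{u} S} {m m' : ℕ}
    {hm : 1 + (m + 1) = m'} {β : Ext (cyclicModule a) Y (m + 1)}
    (hβ : h.extClass.comp β hm = 0) : β = 0 := by
  obtain ⟨γ, rfl⟩ := h.exists_mk₀_comp_eq hβ
  rw [Ext.eq_zero_of_projective γ, Ext.comp_zero]

lemma extClass_comp_cyclicHom_eq_zero_iff (h : IsExactPair a b) {d s : S} (hs : d ∣ a * s) :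
    h.extClass.comp (Ext.mk₀ (cyclicHom s hs)) (add_zero 1) = 0 ↔ ∃ r, d ∣ s - b * r := by
  constructor
  · intro hzero
    obtain ⟨γ, hγ⟩ := h.exists_mk₀_comp_eq hzero
    obtain ⟨g, rfl⟩ := (Ext.mk₀_bijective _ _).2 γ
    obtain ⟨r, hr, rfl⟩ := exists_eq_cyclicHom g
    rw [Ext.mk₀_comp_mk₀, cyclicHom_comp] at hγ
    exact ⟨r, (cyclicHom_eq_iff hs _).1 ((Ext.mk₀_bijective _ _).1 hγ).symm⟩
  · rintro ⟨r, hr⟩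
    have hfactor : cyclicHom s hs =
        cyclicHom b (by rw [h.mul_eq_zero]) ≫ cyclicHom (a := 0) r (by simp) := by
      rw [cyclicHom_comp, cyclicHom_eq_iff]
      exact hr
    rw [hfactor, ← Ext.mk₀_comp_mk₀]
    exact h.shortComplex_shortExact.extClass_comp_assoc (Ext.mk₀ _)

end

section SelfExtensions

variable {S : Type u} [CommRing S] {a b c : S} [HasExt.{w} (ModuleCat.{u} S)]

/-- The class `t` in `Ext²(S/(a), S/(a))` of the periodic resolution. -/
def degreeTwoClass (h : IsExactPair a b) : Ext (cyclicModule a) (cyclicModule a) 2 :=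
  h.symm.extClass.comp h.extClass rfl

/-- The class `u` in `Ext¹(S/(a), S/(a))` obtained by pushing the extension class of the exact
pair forward along multiplication by `c`. -/
def degreeOneClass (h : IsExactPair a b) (hc : a ∣ b * c) :
    Ext (cyclicModule a) (cyclicModule a) 1 :=
  h.symm.extClass.comp (Ext.mk₀ (cyclicHom c hc)) (add_zero 1)

lemma degreeOneClass_comp_self (h : IsExactPair a b) (hc : a ∣ b * c) {v : S}
    (hv : b * c = a * v) :
    (h.degreeOneClass hc).comp (h.degreeOneClass hc) rfl = (v * c) • h.degreeTwoClass := by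
  have hva : b ∣ a * v := hv ▸ dvd_mul_right b c
  have hswap := h.extClass_comp_cyclicHom h.symm (r := v) (by rw [hv, mul_comm]) hva hc
  rw [degreeOneClass, Ext.comp_assoc_of_second_deg_zero,
    ← Ext.comp_assoc_of_third_deg_zero (a₁₂ := 1), ← hswap, Ext.comp_assoc_of_third_deg_zero,
    Ext.mk₀_comp_mk₀, cyclicHom_comp, ← smul_id_cyclicModule,
    ← Ext.comp_assoc_of_third_deg_zero (a₁₂ := 2) _ _ _ rfl, ← Ext.smul_eq_comp_mk₀,
    degreeTwoClass]

lemma degreeOneClass_comp_degreeTwoClass (h : IsExactPair a b) (hc : a ∣ b * c) :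
    (h.degreeOneClass hc).comp h.degreeTwoClass (rfl : 1 + 2 = 3) =
      h.degreeTwoClass.comp (h.degreeOneClass hc) rfl := by
  obtain ⟨v, hv⟩ := id hc
  have hva : b ∣ a * v := hv ▸ dvd_mul_right b c
  have hswap := h.extClass_comp_cyclicHom h.symm (r := v) (by rw [hv, mul_comm]) hva hc
  have hswap' := h.symm.extClass_comp_cyclicHom h (s := v) (by rw [← hv, mul_comm]) hc hva
  rw [degreeTwoClass, Ext.comp_assoc (a₂₃ := 2) _ _ (h.degreeOneClass hc) rfl rfl rfl]
  conv_rhs => rw [degreeOneClass, hswap']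
  rw [degreeOneClass, Ext.comp_assoc_of_second_deg_zero,
    ← Ext.comp_assoc (a₁₂ := 1) (Ext.mk₀ (cyclicHom c hc)) _ _ rfl rfl rfl, ← hswap,
    Ext.comp_assoc_of_second_deg_zero]

/-- The class `u^(m % 2) t^(m / 2)` in `Extᵐ(S/(a), S/(a))`, where `u` and `t` are
`degreeOneClass` and `degreeTwoClass`. -/
def generator (h : IsExactPair a b) (hc : a ∣ b * c) :
    (m : ℕ) → Ext (cyclicModule a) (cyclicModule a) m
  | 0 => Ext.mk₀ (𝟙 _)
  | 1 => h.degreeOneClass hc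
  | m + 2 => h.degreeTwoClass.comp (h.generator hc m) (add_comm 2 m)

lemma degreeTwoClass_comp_generator (h : IsExactPair a b) (hc : a ∣ b * c) {m m' : ℕ}
    (hm : 2 + m = m') :
    h.degreeTwoClass.comp (h.generator hc m) hm = h.generator hc m' := by
  obtain rfl : m' = m + 2 := by lia
  rfl

lemma degreeOneClass_comp_generator (h : IsExactPair a b) (hc : a ∣ b * c)
    (hsq : (h.degreeOneClass hc).comp (h.degreeOneClass hc) rfl = 0) :
    ∀ {m m' : ℕ} (hm : 1 + m = m'), (h.degreeOneClass hc).comp (h.generator hc m) hm =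
      if Odd m then 0 else h.generator hc m'
  | 0, _, rfl => by simp [generator]
  | 1, _, rfl => by simpa [generator] using hsq
  | m + 2, m', hm => by
    have ih := h.degreeOneClass_comp_generator hc hsq (add_comm 1 m)
    rw [generator, ← Ext.comp_assoc (a₁₂ := 3) _ _ _ rfl (by lia) (by lia),
      degreeOneClass_comp_degreeTwoClass,
      Ext.comp_assoc (a₂₃ := m + 1) _ _ _ rfl (by lia) (by lia), ih]
    simp only [Nat.odd_add, even_two, iff_true]
    split_ifs
    · rw [Ext.comp_zero]
    · exact h.degreeTwoClass_comp_generator hc _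

lemma generator_comp_generator (h : IsExactPair a b) (hc : a ∣ b * c)
    (hsq : (h.degreeOneClass hc).comp (h.degreeOneClass hc) rfl = 0) :
    ∀ {p q m : ℕ} (hm : p + q = m), (h.generator hc p).comp (h.generator hc q) hm =
      if Odd p ∧ Odd q then 0 else h.generator hc m
  | 0, q, m, hm => by
    obtain rfl : m = q := by lia
    simp [generator]
  | 1, q, m, hm => by
    simpa [generator] using h.degreeOneClass_comp_generator hc hsq hm
  | p + 2, q, m, hm => by
    have ih := h.generator_comp_generator hc hsq (rfl : p + q = p + q)
    rw [generator, Ext.comp_assoc (a₂₃ := p + q) _ _ _ (by lia) rfl (by lia), ih]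
    simp only [Nat.odd_add, even_two, iff_true]
    split_ifs
    · rw [Ext.comp_zero]
    · exact h.degreeTwoClass_comp_generator hc _

lemma smul_generator_zero_eq_zero_iff (h : IsExactPair a b) (hc : a ∣ b * c) {s : S} :
    s • h.generator hc 0 = 0 ↔ a ∣ s := by
  rw [generator, ← Ext.mk₀_smul, Ext.mk₀_eq_zero_iff, smul_id_cyclicModule, cyclicHom_eq_zero_iff]

lemma smul_generator_one_eq_zero_iff (h : IsExactPair a b) (hc : a ∣ b * c) {s : S} :
    s • h.generator hc 1 = 0 ↔ a ∣ s * c := by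
  rw [generator, degreeOneClass, ← Ext.comp_smul, ← Ext.mk₀_smul, smul_cyclicHom,
    extClass_comp_cyclicHom_eq_zero_iff]
  exact ⟨fun ⟨r, hr⟩ ↦ (dvd_sub_left (dvd_mul_right a r)).1 hr, fun hs ↦ ⟨0, by simpa using hs⟩⟩

lemma degreeTwoClass_comp_eq_zero_iff (h : IsExactPair a b) {Y : ModuleCat.{u} S} {m m' : ℕ}
    (hm : 2 + m = m') (β : Ext (cyclicModule a) Y m) :
    h.degreeTwoClass.comp β hm = 0 ↔ h.extClass.comp β (add_comm 1 m) = 0 := by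
  rw [degreeTwoClass, Ext.comp_assoc (a₂₃ := m + 1) _ _ _ rfl (by lia) (by lia)]
  exact ⟨h.symm.eq_zero_of_extClass_comp_eq_zero, fun hβ ↦ by rw [hβ, Ext.comp_zero]⟩

lemma smul_generator_add_two (h : IsExactPair a b) (hc : a ∣ b * c) (m : ℕ) (s : S) :
    s • h.generator hc (m + 2) =
      h.degreeTwoClass.comp (s • h.generator hc m) (add_comm 2 m) := by
  rw [Ext.comp_smul, generator]

lemma smul_generator_two_eq_zero_iff (h : IsExactPair a b) (hc : a ∣ b * c) {s : S} :
    s • h.generator hc 2 = 0 ↔ ∃ r, a ∣ s - b * r := by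
  rw [smul_generator_add_two, degreeTwoClass_comp_eq_zero_iff, generator, ← Ext.mk₀_smul,
    smul_id_cyclicModule, extClass_comp_cyclicHom_eq_zero_iff]

lemma smul_generator_add_three_eq_zero_iff (h : IsExactPair a b) (hc : a ∣ b * c) {m : ℕ}
    {s : S} : s • h.generator hc (m + 3) = 0 ↔ s • h.generator hc (m + 1) = 0 := by
  rw [smul_generator_add_two, degreeTwoClass_comp_eq_zero_iff]
  exact ⟨h.eq_zero_of_extClass_comp_eq_zero, fun hs ↦ by rw [hs, Ext.comp_zero]⟩

lemma smul_generator_odd_eq_zero_iff (h : IsExactPair a b) (hc : a ∣ b * c) {s : S} (j : ℕ) :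
    s • h.generator hc (2 * j + 1) = 0 ↔ a ∣ s * c := by
  induction j with
  | zero => exact h.smul_generator_one_eq_zero_iff hc
  | succ j ih => exact (h.smul_generator_add_three_eq_zero_iff hc (m := 2 * j)).trans ih

lemma smul_generator_even_eq_zero_iff (h : IsExactPair a b) (hc : a ∣ b * c) {s : S} (j : ℕ) :
    s • h.generator hc (2 * j + 2) = 0 ↔ ∃ r, a ∣ s - b * r := by
  induction j with
  | zero => exact h.smul_generator_two_eq_zero_iff hc
  | succ j ih => exact (h.smul_generator_add_three_eq_zero_iff hc (m := 2 * j + 1)).trans ih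

lemma exists_eq_smul_generator (h : IsExactPair a b) (hc : a ∣ b * c)
    (hgen : ∀ s, a ∣ b * s → ∃ r, a ∣ s - r * c) :
    ∀ {m : ℕ} (α : Ext (cyclicModule a) (cyclicModule a) m), ∃ s : S, α = s • h.generator hc m
  | 0, α => by
    obtain ⟨f, rfl⟩ := (Ext.mk₀_bijective _ _).2 α
    obtain ⟨s, hs, rfl⟩ := exists_eq_cyclicHom f
    exact ⟨s, by rw [generator, ← Ext.mk₀_smul, smul_id_cyclicModule]⟩
  | 1, α => by
    obtain ⟨β, rfl⟩ := h.symm.exists_extClass_comp_eq (add_zero 1) α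
    obtain ⟨f, rfl⟩ := (Ext.mk₀_bijective _ _).2 β
    obtain ⟨s, hs, rfl⟩ := exists_eq_cyclicHom f
    obtain ⟨r, hr⟩ := hgen s hs
    refine ⟨r, ?_⟩
    rw [generator, degreeOneClass, ← Ext.comp_smul, ← Ext.mk₀_smul, smul_cyclicHom,
      (cyclicHom_eq_iff _ _).2 hr]
  | m + 2, α => by
    obtain ⟨β, rfl⟩ := h.symm.exists_extClass_comp_eq (add_comm 1 (m + 1)) α
    obtain ⟨γ, rfl⟩ := h.exists_extClass_comp_eq (add_comm 1 m) β
    obtain ⟨s, rfl⟩ := h.exists_eq_smul_generator hc hgen γ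
    refine ⟨s, ?_⟩
    rw [smul_generator_add_two, degreeTwoClass]
    exact (Ext.comp_assoc _ _ _ _ _ (by lia)).symm

end SelfExtensions

end IsExactPair

section ExtConj

variable {C : Type*} [Category C] [Abelian C] [HasExt.{w} C] {X Y : C}

/-- Conjugation of self-extensions by an isomorphism; it carries the Yoneda algebra of `X` to that
of `Y`. -/
def extConj (i : X ≅ Y) (m : ℕ) : Ext X X m ≃+ Ext Y Y m where
  toFun α := (Ext.mk₀ i.inv).comp (α.comp (Ext.mk₀ i.hom) (add_zero m)) (zero_add m)
  invFun β := (Ext.mk₀ i.hom).comp (β.comp (Ext.mk₀ i.inv) (add_zero m)) (zero_add m)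
  left_inv α := by simp
  right_inv β := by simp
  map_add' α β := by simp

lemma extConj_apply (i : X ≅ Y) {m : ℕ} (α : Ext X X m) :
    extConj i m α = (Ext.mk₀ i.inv).comp (α.comp (Ext.mk₀ i.hom) (add_zero m)) (zero_add m) := rfl

lemma extConj_mk₀_id (i : X ≅ Y) : extConj i 0 (Ext.mk₀ (𝟙 X)) = Ext.mk₀ (𝟙 Y) := by
  rw [extConj_apply, Ext.mk₀_id_comp, Ext.mk₀_comp_mk₀, i.inv_hom_id]

lemma extConj_comp (i : X ≅ Y) {p q m : ℕ} (hm : p + q = m) (α : Ext X X p) (β : Ext X X q) :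
    extConj i m (α.comp β hm) = (extConj i p α).comp (extConj i q β) hm := by
  have hcancel : (α.comp (Ext.mk₀ i.hom) (add_zero p)).comp (extConj i q β) hm =
      α.comp (β.comp (Ext.mk₀ i.hom) (add_zero q)) hm := by
    rw [extConj_apply, Ext.comp_assoc_of_second_deg_zero, Ext.mk₀_comp_mk₀_assoc, i.hom_inv_id,
      Ext.mk₀_id_comp]
  rw [extConj_apply i α, Ext.comp_assoc (a₂₃ := m) _ _ _ (zero_add p) hm (by lia), hcancel,
    extConj_apply, Ext.comp_assoc_of_third_deg_zero]

end ExtConj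

lemma exists_addEquiv_of_surjective {P E F : Type*} [AddCommGroup P] [AddCommGroup E]
    [AddCommGroup F] {φ : P →+ E} {ψ : P →+ F} (hφ : Function.Surjective φ)
    (hψ : Function.Surjective ψ) (hker : ∀ p, φ p = 0 ↔ ψ p = 0) :
    ∃ e : E ≃+ F, ∀ p, e (φ p) = ψ p := by
  let eφ := QuotientAddGroup.quotientKerEquivOfSurjective φ hφ
  let eψ := QuotientAddGroup.quotientKerEquivOfSurjective ψ hψ
  let eker := QuotientAddGroup.quotientAddEquivOfEq (AddSubgroup.ext hker : φ.ker = ψ.ker)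
  refine ⟨eφ.symm.trans (eker.trans eψ), fun p ↦ ?_⟩
  have hp : eφ.symm (φ p) = QuotientAddGroup.mk p := eφ.symm_apply_eq.2 rfl
  rw [AddEquiv.trans_apply, hp]
  rfl

lemma sub_mul_sum_natCast_mul_pow {S : Type*} [CommRing S] (x y : S) (n : ℕ) :
    (x - y) * ∑ i ∈ Finset.range (n + 1), i * (x ^ i * y ^ (n - i)) =
      (n + 1) * x ^ (n + 1) - x * ∑ i ∈ Finset.range (n + 1), x ^ i * y ^ (n - i) := by
  have htelescope := Finset.sum_range_sub (fun i : ℕ ↦ i * (x ^ i * y ^ (n + 1 - i))) (n + 1)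
  simp only [tsub_self, pow_zero, mul_one, Nat.cast_zero, zero_mul, sub_zero, Nat.cast_add,
    Nat.cast_one] at htelescope
  rw [← htelescope, Finset.mul_sum, Finset.mul_sum, ← Finset.sum_sub_distrib]
  refine Finset.sum_congr rfl fun i hi ↦ ?_
  rw [Nat.add_sub_add_right, Nat.sub_add_comm (Finset.mem_range_succ_iff.1 hi)]
  ring

namespace AdjoinRootTensor

variable {S : Type*} [CommRing S] (T : Type*) [CommRing T] [Algebra S T] (f : S[X])

/-- The presentation of `T ⊗ S[X]/(f)` as a quotient of `T[X]`. -/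
def ofPolynomial : T[X] →ₐ[S] T ⊗[S] AdjoinRoot f :=
  (Algebra.TensorProduct.map (AlgHom.id S T) (AdjoinRoot.mkₐ f)).comp (polyEquivTensor S T).toAlgHom

lemma ofPolynomial_C (r : T) : ofPolynomial T f (C r) = r ⊗ₜ 1 := by
  simp [ofPolynomial]

lemma ofPolynomial_X : ofPolynomial T f X = 1 ⊗ₜ AdjoinRoot.root f := by
  simp [ofPolynomial]

lemma ofPolynomial_surjective : Function.Surjective (ofPolynomial T f) :=
  (TensorProduct.map_surjective Function.surjective_id AdjoinRoot.mk_surjective).comp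
    (polyEquivTensor S T).surjective

lemma ofPolynomial_eq_zero_iff (g : T[X]) :
    ofPolynomial T f g = 0 ↔ f.map (algebraMap S T) ∣ g := by
  have hker : RingHom.ker (AdjoinRoot.mkₐ f) = Ideal.span {f} :=
    Ideal.ext fun p ↦ AdjoinRoot.mk_eq_zero.trans Ideal.mem_span_singleton.symm
  have hkerMap := Algebra.TensorProduct.lTensor_ker (A := T) (AdjoinRoot.mkₐ f)
    AdjoinRoot.mk_surjective
  rw [hker, Ideal.map_span, Set.image_singleton] at hkerMap
  have hf : (polyEquivTensor S T).symm (1 ⊗ₜ f) = f.map (algebraMap S T) := by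
    rw [polyEquivTensor_symm_apply_tmul_eq_smul, one_smul]
  calc
    ofPolynomial T f g = 0 ↔ 1 ⊗ₜ f ∣ polyEquivTensor S T g := by
      rw [← Ideal.mem_span_singleton]
      exact SetLike.ext_iff.1 hkerMap (polyEquivTensor S T g)
    _ ↔ f.map (algebraMap S T) ∣ g := by
      rw [← hf, ← map_dvd_iff (polyEquivTensor S T).symm, AlgEquiv.symm_apply_apply]

end AdjoinRootTensor

/-! ### The truncated polynomial ring -/

/-- The exponent `j` for which `Extᵐ(A, A)` is isomorphic to `A/(xʲ)`. -/
def annihilatorExponent (n m : ℕ) : ℕ := if m = 0 then n + 1 else n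

section TruncatedPolynomial

variable (k : Type) [Field k] (n : ℕ)

/-- The class of `x` in `A`. -/
def A.x : A k n := AdjoinRoot.root _

/-- The element `x ⊗ 1` of `B`. -/
def B.xLeft : B k n := A.x k n ⊗ₜ 1

/-- The element `1 ⊗ x` of `B`. -/
def B.xRight : B k n := 1 ⊗ₜ A.x k n

/-- The element `1 ⊗ x - x ⊗ 1` of `B`, which generates the kernel of the multiplication map. -/
def B.diff : B k n := B.xRight k n - B.xLeft k n

/-- The divided difference `∑ xⁿ⁻ⁱ ⊗ xⁱ` of `x ^ (n + 1)`, which generates the annihilator of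
`B.diff`. -/
def B.norm : B k n := ∑ i ∈ Finset.range (n + 1), B.xRight k n ^ i * B.xLeft k n ^ (n - i)

namespace A

lemma x_pow_succ_eq_zero : x k n ^ (n + 1) = 0 := by
  have hself : AdjoinRoot.mk ((X : k[X]) ^ (n + 1)) (X ^ (n + 1)) = 0 := AdjoinRoot.mk_self
  rwa [map_pow] at hself

lemma isExactPair_x : IsExactPair (x k n) (x k n ^ n) := by
  have hpow : (X : k[X]) * X ^ n = X ^ (n + 1) := (pow_succ' X n).symm
  have hexact := IsExactPair.of_surjective (p := X) (q := X ^ n)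
    (AdjoinRoot.mk_surjective (g := (X : k[X]) ^ (n + 1)))
    (hpow ▸ (monic_X_pow (n + 1)).isRegular.left) fun p ↦ by rw [hpow, AdjoinRoot.mk_eq_zero]
  rwa [map_pow] at hexact

variable {k n}

lemma x_pow_dvd_mk_iff {j : ℕ} (hj : j ≤ n + 1) {p : k[X]} :
    x k n ^ j ∣ AdjoinRoot.mk ((X : k[X]) ^ (n + 1)) p ↔ X ^ j ∣ p := by
  constructor
  · rintro ⟨a, ha⟩
    obtain ⟨q, rfl⟩ := AdjoinRoot.mk_surjective a
    have hdvd : (X : k[X]) ^ (n + 1) ∣ p - X ^ j * q := by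
      rw [← AdjoinRoot.mk_eq_zero, map_sub, ha, map_mul, map_pow, AdjoinRoot.mk_X, x, sub_self]
    exact (dvd_sub_left (dvd_mul_right _ _)).1 ((pow_dvd_pow X hj).trans hdvd)
  · intro hp
    simpa only [map_pow] using! map_dvd (AdjoinRoot.mk ((X : k[X]) ^ (n + 1))) hp

lemma isUnit_natCast_succ (hn : (n + 1 : k) ≠ 0) : IsUnit (n + 1 : A k n) := by
  simpa using (IsUnit.mk0 _ hn).map (algebraMap k (A k n))

end A

namespace B

lemma algebraMap_tmul (a b : A k n) : algebraMap (B k n) (A k n) (a ⊗ₜ b) = a * b := rfl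

lemma algebraMap_xLeft : algebraMap (B k n) (A k n) (xLeft k n) = A.x k n := by
  rw [xLeft, algebraMap_tmul, mul_one]

lemma algebraMap_xRight : algebraMap (B k n) (A k n) (xRight k n) = A.x k n := by
  rw [xRight, algebraMap_tmul, one_mul]

lemma algebraMap_norm : algebraMap (B k n) (A k n) (norm k n) = (n + 1) * A.x k n ^ n := by
  simpa [norm, algebraMap_xLeft, algebraMap_xRight] using geom_sum₂_self (A.x k n) (n + 1)

lemma algebraMap_aeval_xRight (p : k[X]) :
    algebraMap (B k n) (A k n) (aeval (xRight k n) p) = AdjoinRoot.mk _ p := by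
  have hp := aeval_algHom_apply (Algebra.TensorProduct.lmul' k (S := A k n)) (xRight k n) p
  exact hp.symm.trans ((congrArg (aeval · p) (algebraMap_xRight k n)).trans (AdjoinRoot.aeval_eq p))

lemma algebraMap_surjective : Function.Surjective (algebraMap (B k n) (A k n)) :=
  fun a ↦ ⟨a ⊗ₜ 1, mul_one a⟩

lemma xRight_pow_succ_eq_zero : xRight k n ^ (n + 1) = 0 := by
  rw [xRight, Algebra.TensorProduct.tmul_pow, A.x_pow_succ_eq_zero, tmul_zero]

lemma ofPolynomial_X_sub_C :
    AdjoinRootTensor.ofPolynomial (A k n) ((X : k[X]) ^ (n + 1)) (X - C (A.x k n)) = diff k n := by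
  rw [map_sub, AdjoinRootTensor.ofPolynomial_X, AdjoinRootTensor.ofPolynomial_C]
  rfl

lemma isExactPair : IsExactPair (diff k n) (norm k n) := by
  let π := AdjoinRootTensor.ofPolynomial (A k n) ((X : k[X]) ^ (n + 1))
  let q : (A k n)[X] := ∑ i ∈ Finset.range (n + 1), X ^ i * C (A.x k n) ^ (n - i)
  have hpq : (X - C (A.x k n)) * q = X ^ (n + 1) := by
    refine ((Commute.all X (C (A.x k n))).mul_geom_sum₂ (n + 1)).trans ?_
    rw [← C_pow, A.x_pow_succ_eq_zero, C_0, sub_zero]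
  have hq : π q = norm k n := by
    simp only [π, q, norm, map_sum, map_mul, map_pow, AdjoinRootTensor.ofPolynomial_X,
      AdjoinRootTensor.ofPolynomial_C]
    rfl
  rw [← ofPolynomial_X_sub_C, ← hq]
  refine IsExactPair.of_surjective (π := π.toRingHom)
    (AdjoinRootTensor.ofPolynomial_surjective (A k n) _)
    (hpq ▸ (monic_X_pow (n + 1)).isRegular.left) fun f ↦ ?_
  rw [hpq]
  simpa only [Polynomial.map_pow, map_X] using!
    AdjoinRootTensor.ofPolynomial_eq_zero_iff (A k n) ((X : k[X]) ^ (n + 1)) f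

lemma algebraMap_ofPolynomial (f : (A k n)[X]) :
    algebraMap (B k n) (A k n) (AdjoinRootTensor.ofPolynomial (A k n) ((X : k[X]) ^ (n + 1)) f) =
      f.eval (A.x k n) := by
  induction f using Polynomial.induction_on' with
  | add f g hf hg => rw [map_add, map_add, hf, hg, eval_add]
  | monomial i a =>
    rw [← C_mul_X_pow_eq_monomial, map_mul, map_pow, AdjoinRootTensor.ofPolynomial_C,
      AdjoinRootTensor.ofPolynomial_X, map_mul, map_pow, algebraMap_tmul, algebraMap_tmul, mul_one,
      one_mul, eval_mul, eval_C, eval_X_pow]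
    rfl

variable {k n}

lemma algebraMap_eq_zero_iff {b : B k n} : algebraMap (B k n) (A k n) b = 0 ↔ diff k n ∣ b := by
  constructor
  · obtain ⟨f, rfl⟩ := AdjoinRootTensor.ofPolynomial_surjective (A k n) _ b
    rw [algebraMap_ofPolynomial, ← ofPolynomial_X_sub_C]
    exact fun hf ↦ map_dvd _ (dvd_iff_isRoot.2 hf)
  · rintro ⟨c, rfl⟩
    rw [map_mul, diff, map_sub, algebraMap_xLeft, algebraMap_xRight, sub_self, zero_mul]

variable (k n)

lemma exists_norm_mul_xRight_eq :
    ∃ v, norm k n * xRight k n = diff k n * v ∧ diff k n ∣ v * xRight k n := by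
  let w := ∑ i ∈ Finset.range (n + 1), i * (xRight k n ^ i * xLeft k n ^ (n - i))
  have hw : diff k n * w = -(xRight k n * norm k n) := by
    rw [diff, sub_mul_sum_natCast_mul_pow, xRight_pow_succ_eq_zero, mul_zero, zero_sub, norm]
  refine ⟨-w, by rw [mul_neg, hw, neg_neg, mul_comm], ?_⟩
  have hzero : algebraMap (B k n) (A k n) (w * xRight k n) = 0 := by
    rw [map_mul, map_sum, algebraMap_xRight, Finset.sum_mul]
    refine Finset.sum_eq_zero fun i hi ↦ ?_
    rw [map_mul, map_mul, map_pow, map_pow, algebraMap_xLeft, algebraMap_xRight, ← pow_add,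
      Nat.add_sub_of_le (Finset.mem_range_succ_iff.1 hi), mul_assoc, ← pow_succ,
      A.x_pow_succ_eq_zero, mul_zero]
  rw [neg_mul, dvd_neg]
  exact algebraMap_eq_zero_iff.1 hzero

lemma diff_dvd_norm_mul_xRight : diff k n ∣ norm k n * xRight k n :=
  let ⟨v, hv, _⟩ := exists_norm_mul_xRight_eq k n
  ⟨v, hv⟩

variable {k n}

lemma diff_dvd_mul_xRight_iff {b : B k n} :
    diff k n ∣ b * xRight k n ↔ A.x k n ^ n ∣ algebraMap (B k n) (A k n) b := by
  rw [← algebraMap_eq_zero_iff, map_mul, algebraMap_xRight, mul_comm,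
    (A.isExactPair_x k n).left_mul_eq_zero_iff]

lemma exists_diff_dvd_sub_norm_mul_iff (hn : (n + 1 : k) ≠ 0) {b : B k n} :
    (∃ r, diff k n ∣ b - norm k n * r) ↔ A.x k n ^ n ∣ algebraMap (B k n) (A k n) b := by
  simp only [← algebraMap_eq_zero_iff, map_sub, map_mul, algebraMap_norm, sub_eq_zero]
  rw [← (A.isUnit_natCast_succ hn).mul_left_dvd]
  exact ((algebraMap_surjective k n).exists (p := fun a ↦ _ = _ * a)).symm

lemma exists_diff_dvd_sub_mul_xRight (hn : (n + 1 : k) ≠ 0) {b : B k n}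
    (hb : diff k n ∣ norm k n * b) : ∃ r, diff k n ∣ b - r * xRight k n := by
  rw [← algebraMap_eq_zero_iff, map_mul, algebraMap_norm, mul_assoc,
    (A.isUnit_natCast_succ hn).mul_right_eq_zero,
    (A.isExactPair_x k n).right_mul_eq_zero_iff] at hb
  obtain ⟨a, ha⟩ := hb
  obtain ⟨r, rfl⟩ := algebraMap_surjective k n a
  refine ⟨r, algebraMap_eq_zero_iff.1 ?_⟩
  rw [map_sub, ha, map_mul, algebraMap_xRight, mul_comm, sub_self]

end B

/-- The presentation of the `B`-module `A` as `B/(1 ⊗ x - x ⊗ 1)`. -/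
def M.isoCyclicModule : M k n ≅ cyclicModule (B.diff k n) :=
  have hker : Ideal.span {B.diff k n} = (Algebra.linearMap (B k n) (A k n)).ker :=
    Ideal.ext fun _ ↦ Ideal.mem_span_singleton.trans B.algebraMap_eq_zero_iff.symm
  ((Submodule.quotEquivOfEq _ _ hker).trans <|
    (Algebra.linearMap (B k n) (A k n)).quotKerEquivOfSurjective
      (B.algebraMap_surjective k n)).symm.toModuleIso

/-- The generator `u^(m % 2) t^(m / 2)` of the `B`-module `Extᵐ(A, A)`. -/
def extGenerator (m : ℕ) : Ext (cyclicModule (B.diff k n)) (cyclicModule (B.diff k n)) m :=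
  (B.isExactPair k n).generator (B.diff_dvd_norm_mul_xRight k n) m

lemma extGenerator_comp_extGenerator (p q : ℕ) :
    (extGenerator k n p).comp (extGenerator k n q) rfl =
      if Odd p ∧ Odd q then 0 else extGenerator k n (p + q) := by
  obtain ⟨v, hv, hvx⟩ := B.exists_norm_mul_xRight_eq k n
  refine (B.isExactPair k n).generator_comp_generator _ ?_ rfl
  rw [IsExactPair.degreeOneClass_comp_self _ _ hv, smul_ext_cyclicModule_eq_zero hvx]

variable {k n}

lemma smul_extGenerator_eq_zero_iff (hn : (n + 1 : k) ≠ 0) {m : ℕ} {b : B k n} :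
    b • extGenerator k n m = 0 ↔
      A.x k n ^ annihilatorExponent n m ∣ algebraMap (B k n) (A k n) b := by
  obtain rfl | j := m
  · exact ((B.isExactPair k n).smul_generator_zero_eq_zero_iff _).trans <| by
      rw [annihilatorExponent, if_pos rfl, A.x_pow_succ_eq_zero, zero_dvd_iff,
        B.algebraMap_eq_zero_iff]
  rw [annihilatorExponent, if_neg j.succ_ne_zero]
  obtain ⟨i, rfl | rfl⟩ := j.even_or_odd'
  · exact ((B.isExactPair k n).smul_generator_odd_eq_zero_iff _ i).trans B.diff_dvd_mul_xRight_iff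
  · exact ((B.isExactPair k n).smul_generator_even_eq_zero_iff _ i).trans
      (B.exists_diff_dvd_sub_norm_mul_iff hn)

lemma exists_eq_aeval_smul_extGenerator (hn : (n + 1 : k) ≠ 0) {m : ℕ}
    (α : Ext (cyclicModule (B.diff k n)) (cyclicModule (B.diff k n)) m) :
    ∃ p : k[X], α = aeval (B.xRight k n) p • extGenerator k n m := by
  obtain ⟨b, rfl⟩ := (B.isExactPair k n).exists_eq_smul_generator
    (B.diff_dvd_norm_mul_xRight k n) (fun _ ↦ B.exists_diff_dvd_sub_mul_xRight hn) α
  obtain ⟨p, hp⟩ := AdjoinRoot.mk_surjective (algebraMap (B k n) (A k n) b)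
  refine ⟨p, sub_eq_zero.1 ?_⟩
  rw [← extGenerator, ← sub_smul, smul_extGenerator_eq_zero_iff hn, map_sub,
    B.algebraMap_aeval_xRight, hp, sub_self]
  exact dvd_zero _

lemma aeval_smul_extGenerator_eq_zero_iff (hn : (n + 1 : k) ≠ 0) {m : ℕ} {p : k[X]} :
    aeval (B.xRight k n) p • extGenerator k n m = 0 ↔ X ^ annihilatorExponent n m ∣ p := by
  have hle : annihilatorExponent n m ≤ n + 1 := by
    rw [annihilatorExponent]
    split_ifs <;> lia
  rw [smul_extGenerator_eq_zero_iff hn, B.algebraMap_aeval_xRight, A.x_pow_dvd_mk_iff hle]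

end TruncatedPolynomial

/-! ### The presented graded ring -/

namespace R

variable (k : Type) [Field k] (n : ℕ)

/-- The classes `x = var 0`, `u = var 1` and `t = var 2` of the variables in the presented ring. -/
def var (i : Fin 3) : R k n := Ideal.Quotient.mk (I k n) (MvPolynomial.X i)

/-- The monomial `u^(m % 2) t^(m / 2)`, which generates the component of degree `m`. -/
def generator (m : ℕ) : R k n := var k n 1 ^ (m % 2) * var k n 2 ^ (m / 2)

/-- The exponent of the monomial `x^i u^(m % 2) t^(m / 2)` of degree `m`. -/
def exponent (i m : ℕ) : Fin 3 →₀ ℕ := Finsupp.equivFunOnFinite.symm ![i, m % 2, m / 2]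

/-- The polynomial `p(x) u^(m % 2) t^(m / 2)` of degree `m`. -/
def lift (m : ℕ) (p : k[X]) : MvPolynomial (Fin 3) k :=
  ∑ i ∈ p.support, MvPolynomial.monomial (exponent i m) (p.coeff i)

lemma weight_eq (e : Fin 3 →₀ ℕ) :
    Finsupp.weight (![0, 1, 2] : Fin 3 → ℕ) e = e 1 + 2 * e 2 := by
  simp [Finsupp.weight_apply, Finsupp.sum_fintype, Fin.sum_univ_three, mul_comm]

lemma weight_exponent (i m : ℕ) :
    Finsupp.weight (![0, 1, 2] : Fin 3 → ℕ) (exponent i m) = m :=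
  (weight_eq _).trans (Nat.mod_add_div m 2)

lemma exponent_injective (m : ℕ) : Function.Injective (exponent · m) :=
  fun _ _ h ↦ congr($h 0)

lemma eq_exponent {e : Fin 3 →₀ ℕ} {m : ℕ}
    (he : Finsupp.weight (![0, 1, 2] : Fin 3 → ℕ) e = m) (hu : e 1 < 2) :
    e = exponent (e 0) m := by
  rw [weight_eq] at he
  ext i
  fin_cases i
  · rfl
  · change e 1 = m % 2
    lia
  · change e 2 = m / 2
    lia

lemma isWeightedHomogeneous_lift (m : ℕ) (p : k[X]) :
    (lift k m p).IsWeightedHomogeneous (![0, 1, 2] : Fin 3 → ℕ) m :=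
  MvPolynomial.IsWeightedHomogeneous.sum _ _ _ fun i _ ↦
    MvPolynomial.isWeightedHomogeneous_monomial _ _ _ (weight_exponent i m)

lemma coeff_lift (i m : ℕ) (p : k[X]) : (lift k m p).coeff (exponent i m) = p.coeff i := by
  simp only [lift, MvPolynomial.coeff_sum, MvPolynomial.coeff_monomial,
    (exponent_injective m).eq_iff, Finset.sum_ite_eq', mem_support_iff, ite_eq_left_iff, not_not]
  exact Eq.symm

lemma mk_monomial (e : Fin 3 →₀ ℕ) (c : k) :
    Ideal.Quotient.mk (I k n) (MvPolynomial.monomial e c) =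
      algebraMap k (R k n) c * (var k n 0 ^ e 0 * var k n 1 ^ e 1 * var k n 2 ^ e 2) := by
  rw [MvPolynomial.monomial_eq, Finsupp.prod_fintype _ _ (fun _ ↦ pow_zero _), Fin.prod_univ_three]
  simp only [map_mul, map_pow]
  rfl

lemma mk_monomial_exponent (i m : ℕ) (c : k) :
    Ideal.Quotient.mk (I k n) (MvPolynomial.monomial (exponent i m) c) =
      aeval (var k n 0) (monomial i c) * generator k n m := by
  rw [mk_monomial, aeval_monomial, generator, mul_assoc, mul_assoc]
  rfl

lemma mk_lift (m : ℕ) (p : k[X]) :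
    Ideal.Quotient.mk (I k n) (lift k m p) = aeval (var k n 0) p * generator k n m := by
  conv_rhs => rw [p.as_sum_support, map_sum, Finset.sum_mul]
  simp only [lift, map_sum, mk_monomial_exponent]

lemma var_zero_pow_succ : var k n 0 ^ (n + 1) = 0 := by
  rw [var, ← map_pow, Ideal.Quotient.eq_zero_iff_mem]
  exact Ideal.subset_span (by simp)

lemma var_one_sq : var k n 1 ^ 2 = 0 := by
  rw [var, ← map_pow, Ideal.Quotient.eq_zero_iff_mem]
  exact Ideal.subset_span (by simp)

lemma var_zero_pow_mul_var_two : var k n 0 ^ n * var k n 2 = 0 := by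
  rw [var, var, ← map_pow, ← map_mul, Ideal.Quotient.eq_zero_iff_mem]
  exact Ideal.subset_span (by simp)

lemma var_one_mul_var_zero_pow : var k n 1 * var k n 0 ^ n = 0 := by
  rw [var, var, ← map_pow, ← map_mul, Ideal.Quotient.eq_zero_iff_mem]
  exact Ideal.subset_span (by simp)

lemma generator_mul_generator (p q : ℕ) :
    generator k n p * generator k n q =
      if Odd p ∧ Odd q then 0 else generator k n (p + q) := by
  simp only [generator, Nat.odd_iff]
  split_ifs with hodd
  · rw [hodd.1, hodd.2]
    linear_combination var k n 2 ^ (p / 2) * var k n 2 ^ (q / 2) * var_one_sq k n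
  · have hmod : (p + q) % 2 = p % 2 + q % 2 := by lia
    have hdiv : (p + q) / 2 = p / 2 + q / 2 := by lia
    rw [hmod, hdiv]
    ring

lemma var_zero_pow_mul_generator (m : ℕ) :
    var k n 0 ^ annihilatorExponent n m * generator k n m = 0 := by
  obtain rfl | j := m
  · rw [annihilatorExponent, if_pos rfl, var_zero_pow_succ, zero_mul]
  rw [annihilatorExponent, if_neg j.succ_ne_zero, generator]
  obtain ⟨i, rfl | rfl⟩ := j.even_or_odd'
  · rw [show (2 * i + 1) % 2 = 1 by lia, pow_one, ← mul_assoc, mul_comm (var k n 0 ^ n),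
      var_one_mul_var_zero_pow, zero_mul]
  · rw [show (2 * i + 1 + 1) / 2 = i + 1 by lia, pow_succ', mul_left_comm, ← mul_assoc (_ ^ n),
      var_zero_pow_mul_var_two, zero_mul, mul_zero]

lemma I_eq_span_monomial :
    I k n = Ideal.span ((fun e ↦ MvPolynomial.monomial e (1 : k)) ''
      {Finsupp.single 0 (n + 1), Finsupp.single 1 2, Finsupp.single 0 n + Finsupp.single 2 1,
        Finsupp.single 1 1 + Finsupp.single 0 n}) := by
  simp only [I, Set.image_insert_eq, Set.image_singleton, MvPolynomial.monomial_add_single,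
    ← MvPolynomial.X_pow_eq_monomial, pow_one]

lemma annihilatorExponent_le_of_mem_support {m i : ℕ} {f : MvPolynomial (Fin 3) k}
    (hf : f ∈ I k n) (hi : exponent i m ∈ f.support) : annihilatorExponent n m ≤ i := by
  rw [I_eq_span_monomial, MvPolynomial.mem_ideal_span_monomial_image] at hf
  obtain ⟨e, he, hle⟩ := hf _ hi
  have hx : e 0 ≤ i := hle 0
  have hu : e 1 ≤ m % 2 := hle 1
  have ht : e 2 ≤ m / 2 := hle 2
  rw [annihilatorExponent]
  simp only [Set.mem_insert_iff, Set.mem_singleton_iff] at he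
  rcases he with rfl | rfl | rfl | rfl <;>
    grind [Finsupp.add_apply]

lemma aeval_mul_generator_eq_zero_iff {m : ℕ} {p : k[X]} :
    aeval (var k n 0) p * generator k n m = 0 ↔ X ^ annihilatorExponent n m ∣ p := by
  constructor
  · rw [← mk_lift, Ideal.Quotient.eq_zero_iff_mem, X_pow_dvd_iff]
    intro hp i hi
    by_contra hcoeff
    refine hi.not_ge (annihilatorExponent_le_of_mem_support k n hp ?_)
    rwa [MvPolynomial.mem_support_iff, coeff_lift]
  · rintro ⟨q, rfl⟩
    rw [map_mul, aeval_X_pow, mul_right_comm, var_zero_pow_mul_generator, zero_mul]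

lemma exists_mk_eq_aeval_mul_generator {m : ℕ} {f : MvPolynomial (Fin 3) k}
    (hf : f.IsWeightedHomogeneous (![0, 1, 2] : Fin 3 → ℕ) m) :
    ∃ p : k[X], aeval (var k n 0) p * generator k n m = Ideal.Quotient.mk (I k n) f := by
  induction hf using MvPolynomial.IsWeightedHomogeneous.induction_on with
  | zero => exact ⟨0, by simp⟩
  | add f g _ _ hf hg =>
    obtain ⟨p, hp⟩ := hf
    obtain ⟨q, hq⟩ := hg
    exact ⟨p + q, by rw [map_add, map_add, add_mul, hp, hq]⟩
  | monomial e c he =>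
    obtain hu | hu := lt_or_ge (e 1) 2
    · refine ⟨monomial (e 0) c, ?_⟩
      rw [← mk_monomial_exponent, ← eq_exponent he hu]
    · refine ⟨0, ?_⟩
      rw [mk_monomial, pow_eq_zero_of_le hu (var_one_sq k n)]
      simp

/-- The map `p ↦ p(x) u^(m % 2) t^(m / 2)` onto the component of degree `m`. -/
def ofPolynomial (m : ℕ) : k[X] →+ G k n m :=
  ((AddMonoidHom.mulRight (generator k n m)).comp
    (aeval (var k n 0) : k[X] →ₐ[k] R k n).toAddMonoidHom).codRestrict (G k n m) fun p ↦
      ⟨lift k m p, isWeightedHomogeneous_lift k m p, mk_lift k n m p⟩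

lemma coe_ofPolynomial (m : ℕ) (p : k[X]) :
    (ofPolynomial k n m p : R k n) = aeval (var k n 0) p * generator k n m := rfl

lemma ofPolynomial_surjective (m : ℕ) : Function.Surjective (ofPolynomial k n m) := by
  rintro ⟨_, f, hf, rfl⟩
  obtain ⟨p, hp⟩ := exists_mk_eq_aeval_mul_generator k n hf
  exact ⟨p, Subtype.ext hp⟩

end R

lemma exists_addEquiv_smul_extGenerator (k : Type) [Field k] (n : ℕ) (hn : (n + 1 : k) ≠ 0)
    (m : ℕ) :
    ∃ e : Ext (cyclicModule (B.diff k n)) (cyclicModule (B.diff k n)) m ≃+ G k n m,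
      ∀ p : k[X], (e (aeval (B.xRight k n) p • extGenerator k n m) : R k n) =
        aeval (R.var k n 0) p * R.generator k n m := by
  let φ : k[X] →+ Ext (cyclicModule (B.diff k n)) (cyclicModule (B.diff k n)) m :=
    .mk' (fun p ↦ aeval (B.xRight k n) p • extGenerator k n m) fun p q ↦ by
      rw [map_add, add_smul]
  have hφ : Function.Surjective φ := fun α ↦
    (exists_eq_aeval_smul_extGenerator hn α).imp fun _ ↦ Eq.symm
  have hker (p : k[X]) : φ p = 0 ↔ R.ofPolynomial k n m p = 0 :=
    (aeval_smul_extGenerator_eq_zero_iff hn).trans <| by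
      rw [← Submodule.coe_eq_zero, R.coe_ofPolynomial, R.aeval_mul_generator_eq_zero_iff]
  obtain ⟨e, he⟩ := exists_addEquiv_of_surjective hφ (R.ofPolynomial_surjective k n m) hker
  exact ⟨e, fun p ↦ congrArg Subtype.val (he p)⟩

theorem stmt8_general (k : Type) [Field k] (n : ℕ) (hn : (n + 1 : k) ≠ 0) :
    ∃ e : ∀ m : ℕ, Abelian.Ext (M k n) (M k n) m ≃+ G k n m,
      ((e 0 (Abelian.Ext.mk₀ (𝟙 (M k n))) : R k n) = 1) ∧
      ∀ (a b : ℕ) (α : Abelian.Ext (M k n) (M k n) a) (β : Abelian.Ext (M k n) (M k n) b),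
        ((e (a + b) (α.comp β rfl) : R k n) = (e a α : R k n) * (e b β : R k n)) := by
  choose e he using exists_addEquiv_smul_extGenerator k n hn
  refine ⟨fun m ↦ (extConj (M.isoCyclicModule k n) m).trans (e m), ?_, fun a b α β ↦ ?_⟩
  · have hone := he 0 1
    rw [map_one, one_smul, map_one, one_mul] at hone
    rw [AddEquiv.trans_apply, extConj_mk₀_id]
    exact hone.trans (by simp [R.generator])
  · simp only [AddEquiv.trans_apply, extConj_comp]
    obtain ⟨p, hp⟩ := exists_eq_aeval_smul_extGenerator hn (extConj (M.isoCyclicModule k n) a α)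
    obtain ⟨q, hq⟩ := exists_eq_aeval_smul_extGenerator hn (extConj (M.isoCyclicModule k n) b β)
    rw [hp, hq, he, he, Ext.smul_comp, Ext.comp_smul, smul_smul, ← map_mul,
      extGenerator_comp_extGenerator, mul_mul_mul_comm, ← map_mul, R.generator_mul_generator]
    split_ifs
    · simp
    · exact he (a + b) (p * q)

/-- for a field `k` of characteristic zero, the graded ring
`HH^*(A;A) = ⊕ₘ Ext^m_B(A,A)` with the Yoneda (composition) product is isomorphic as a
graded ring to `k[x,u,t]/(x^{n+1}, u², xⁿt, uxⁿ)` with `x, u, t` in degrees `0, 1, 2`. -/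
theorem stmt8 (k : Type) [Field k] [CharZero k] (n : ℕ) (hn : 1 ≤ n) :
    ∃ e : ∀ m : ℕ, Abelian.Ext (M k n) (M k n) m ≃+ G k n m,
      ((e 0 (Abelian.Ext.mk₀ (𝟙 (M k n))) : R k n) = 1) ∧
      ∀ (a b : ℕ) (α : Abelian.Ext (M k n) (M k n) a) (β : Abelian.Ext (M k n) (M k n) b),
        ((e (a + b) (α.comp β rfl) : R k n) = (e a α : R k n) * (e b β : R k n)) := by
  exact stmt8_general k n n.cast_add_one_ne_zero

end
end

section
/- Let p be an odd prime, k a field of characteristic p, and n ≥ 1 an integer such that p does not divide n+1 (equivalently, n is not of the form kp−1). Let A = k[x]/(x^{n+1}) and B = A ⊗_k A. The graded ring HH^*(A;A) = ⊕_{m≥0} Ext^m_B(A,A), with the Yoneda (composition) product, is isomorphic as a graded ring to k[x,u,t]/(x^{n+1}, u², x^n t, u x^n), where x, u, t have cohomological degrees 0, 1, 2 respectively. -/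
open Polynomial TensorProduct CategoryTheory

noncomputable section

/-!
Put `d = 1 ⊗ x - x ⊗ 1` and `N = ∑ i, x ^ (n - i) ⊗ x ^ i`. Then `A = B/(d)`, and `d` and `N`
generate each other's annihilators. Splicing `0 → B/(N) → B → A → 0` with `0 → A → B → B/(N) → 0`
gives `t ∈ Ext²(A, A)`, and composition with `t` is the two-periodicity of `Ext`. Since
`μ(N) = (n + 1) x ^ n` with `n + 1` invertible, `Ext¹(A, A)` is generated by the push-out `u` of the
first extension along `κ : B/(N) → A`, `1 ↦ x ⊗ 1`, and `x ^ n` generates the annihilator of every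
positive degree.

Evaluating derivatives on the diagonal shows that `(x ⊗ 1) N = d v` for some `v` with
`x μ(v) = (∑ i) x ^ (n + 1) = 0`. So there is a map `ρ : A → B/(N)`, `1 ↦ v`, and naturality of
extension classes lets one of `κ`, `ρ` be exchanged for the other across each of the two
extensions. This gives `u t = t u`, and shows that `u ^ 2` factors through `κ ρ = x μ(v) = 0`.
-/

namespace TruncatedHochschild

universe u w

/-- An *exact pair of zero divisors*: each of `a` and `b` generates the annihilator of the
other, so that `R ⧸ (a)` has a free resolution alternating between `a` and `b`. -/
structure IsExactPair {R : Type*} [CommRing R] (a b : R) : Prop where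
  mul_left_eq_zero_iff : ∀ x, a * x = 0 ↔ b ∣ x
  mul_right_eq_zero_iff : ∀ x, b * x = 0 ↔ a ∣ x

namespace IsExactPair

variable {R : Type*} [CommRing R] {a b : R}

lemma symm (h : IsExactPair a b) : IsExactPair b a :=
  ⟨h.mul_right_eq_zero_iff, h.mul_left_eq_zero_iff⟩

lemma mul_eq_zero (h : IsExactPair a b) : a * b = 0 :=
  (h.mul_left_eq_zero_iff b).2 dvd_rfl

lemma unit_mul_right (h : IsExactPair a b) {c : R} (hc : IsUnit c) : IsExactPair a (c * b) where
  mul_left_eq_zero_iff x := by rw [h.mul_left_eq_zero_iff, hc.mul_left_dvd]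
  mul_right_eq_zero_iff x := by
    rw [mul_assoc, hc.mul_right_eq_zero, h.mul_right_eq_zero_iff]

end IsExactPair

lemma map_mul_eq_zero_iff_dvd {P R : Type*} [CommRing P] [CommRing R] {φ : P →+* R}
    (hφ : Function.Surjective φ) {a b : P} (hab : IsRegular (a * b))
    (hker : RingHom.ker φ = Ideal.span {a * b}) (x : R) : φ a * x = 0 ↔ φ b ∣ x := by
  have map_eq_zero_iff (p : P) : φ p = 0 ↔ a * b ∣ p := by
    rw [← RingHom.mem_ker, hker, Ideal.mem_span_singleton]
  constructor
  · obtain ⟨p, rfl⟩ := hφ x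
    rw [← map_mul, map_eq_zero_iff]
    rintro ⟨c, hc⟩
    have hp : p = b * c := hab.right.of_mul (show p * a = b * c * a by linear_combination hc)
    exact ⟨φ c, by rw [hp, map_mul]⟩
  · rintro ⟨y, rfl⟩
    rw [← mul_assoc, ← map_mul, (map_eq_zero_iff _).2 dvd_rfl, zero_mul]

lemma IsExactPair.of_isRegular_mul {P R : Type*} [CommRing P] [CommRing R] {φ : P →+* R}
    (hφ : Function.Surjective φ) {a b : P} (hab : IsRegular (a * b))
    (hker : RingHom.ker φ = Ideal.span {a * b}) : IsExactPair (φ a) (φ b) :=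
  ⟨map_mul_eq_zero_iff_dvd hφ hab hker,
    map_mul_eq_zero_iff_dvd hφ (mul_comm a b ▸ hab) (mul_comm a b ▸ hker)⟩

/-- The module `Z` is cyclic, generated by `z`, and the annihilator of `z` is the principal
ideal `(a)`; so `Z` is the cyclic module `R ⧸ (a)` with chosen generator `z`. -/
structure IsCyclicGenerator {R Z : Type*} [CommRing R] [AddCommGroup Z] [Module R Z]
    (a : R) (z : Z) : Prop where
  exists_smul_eq : ∀ y : Z, ∃ r : R, r • z = y
  smul_eq_zero_iff : ∀ r : R, r • z = 0 ↔ a ∣ r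

namespace IsCyclicGenerator

variable {R Z Y : Type*} [CommRing R] [AddCommGroup Z] [Module R Z] [AddCommGroup Y] [Module R Y]
  {a : R} {z : Z}

lemma algebra_one {Z : Type*} [CommRing Z] [Algebra R Z]
    (hsurj : Function.Surjective (algebraMap R Z))
    (hker : RingHom.ker (algebraMap R Z) = Ideal.span {a}) : IsCyclicGenerator a (1 : Z) where
  exists_smul_eq y := by simpa only [Algebra.algebraMap_eq_smul_one] using hsurj y
  smul_eq_zero_iff r := by
    rw [← Algebra.algebraMap_eq_smul_one, ← RingHom.mem_ker, hker, Ideal.mem_span_singleton]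

lemma quotient_one (a : R) : IsCyclicGenerator a (1 : R ⧸ Ideal.span {a}) :=
  algebra_one Ideal.Quotient.mk_surjective Ideal.mk_ker

lemma smul_eq_zero (hz : IsCyclicGenerator a z) (y : Z) : a • y = 0 := by
  obtain ⟨r, rfl⟩ := hz.exists_smul_eq y
  rw [smul_comm, (hz.smul_eq_zero_iff a).2 dvd_rfl, smul_zero]

lemma linearMap_ext (hz : IsCyclicGenerator a z) {f g : Z →ₗ[R] Y} (h : f z = g z) : f = g := by
  ext y
  obtain ⟨r, rfl⟩ := hz.exists_smul_eq y
  rw [map_smul, map_smul, h]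

lemma exists_linearMap (hz : IsCyclicGenerator a z) (y : Y) (hy : a • y = 0) :
    ∃ f : Z →ₗ[R] Y, f z = y := by
  let φ := LinearMap.toSpanSingleton R Z z
  have hφ : Function.Surjective φ := hz.exists_smul_eq
  have hker : LinearMap.ker φ ≤ LinearMap.ker (LinearMap.toSpanSingleton R Y y) := fun r hr => by
    obtain ⟨c, rfl⟩ := (hz.smul_eq_zero_iff r).1 hr
    rw [LinearMap.mem_ker, LinearMap.toSpanSingleton_apply, mul_comm, mul_smul, hy, smul_zero]
  refine ⟨(LinearMap.ker φ).liftQ _ hker ∘ₗ (φ.quotKerEquivOfSurjective hφ).symm, ?_⟩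
  have hz' : (φ.quotKerEquivOfSurjective hφ).symm z = (LinearMap.ker φ).mkQ 1 := by
    rw [LinearEquiv.symm_apply_eq]
    exact (one_smul R z).symm
  rw [LinearMap.comp_apply, LinearEquiv.coe_coe, hz', Submodule.mkQ_apply, Submodule.liftQ_apply,
    LinearMap.toSpanSingleton_apply, one_smul]

end IsCyclicGenerator

open Abelian

section DimensionShift

variable {C : Type*} [Category* C] [Abelian C] [HasExt.{w} C] {T : ShortComplex C}
  (hT : T.ShortExact) {Y : C}

lemma extClass_comp_surjective [Projective T.X₂] {m l : ℕ} (h : 1 + m = l) (β : Ext T.X₃ Y l) :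
    ∃ α : Ext T.X₁ Y m, hT.extClass.comp α h = β := by
  obtain rfl : l = m + 1 := by lia
  exact Ext.contravariant_sequence_exact₃ hT _ β (Ext.eq_zero_of_projective _) h

lemma extClass_comp_eq_zero_iff [Projective T.X₂] {m l : ℕ} (hm : 1 ≤ m) (h : 1 + m = l)
    (α : Ext T.X₁ Y m) : hT.extClass.comp α h = 0 ↔ α = 0 := by
  refine ⟨fun h0 => ?_, fun h0 => by rw [h0, Ext.comp_zero]⟩
  obtain ⟨m, rfl⟩ := Nat.exists_eq_add_of_le' hm
  obtain ⟨γ, rfl⟩ := Ext.contravariant_sequence_exact₁ hT _ α h h0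
  rw [Ext.eq_zero_of_projective γ, Ext.comp_zero]

lemma extClass_comp_mk₀_eq_zero_iff (f : T.X₁ ⟶ Y) :
    hT.extClass.comp (Ext.mk₀ f) (add_zero 1) = 0 ↔ ∃ g : T.X₂ ⟶ Y, T.f ≫ g = f := by
  constructor
  · intro h0
    obtain ⟨γ, hγ⟩ := Ext.contravariant_sequence_exact₁ hT _ (Ext.mk₀ f) (add_zero 1) h0
    obtain ⟨g, rfl⟩ := (Ext.mk₀_bijective _ _).2 γ
    rw [Ext.mk₀_comp_mk₀] at hγ
    exact ⟨g, (Ext.mk₀_bijective _ _).1 hγ⟩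
  · rintro ⟨g, rfl⟩
    rw [← Ext.mk₀_comp_mk₀]
    exact hT.extClass_comp_assoc _

end DimensionShift

section YonedaProducts

variable {C : Type*} [Category* C] [Abelian C] [HasExt.{w} C] {Z K : C}

section Exchange

variable {δ : Ext K Z 1} {ε : Ext Z K 1} {κ : K ⟶ Z} {ρ : Z ⟶ K}

lemma comp_comm_of_exchange
    (hδ : δ.comp (Ext.mk₀ ρ) (add_zero 1) = (Ext.mk₀ κ).comp ε (zero_add 1))
    (hε : ε.comp (Ext.mk₀ κ) (add_zero 1) = (Ext.mk₀ ρ).comp δ (zero_add 1)) :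
    (ε.comp (Ext.mk₀ κ) (add_zero 1)).comp (ε.comp δ (rfl : _ = 2)) (rfl : _ = 3) =
      (ε.comp δ (rfl : _ = 2)).comp (ε.comp (Ext.mk₀ κ) (add_zero 1)) rfl := by
  have κ_comp_eq : (Ext.mk₀ κ).comp (ε.comp δ (rfl : _ = 2)) (zero_add 2) =
      δ.comp (ε.comp (Ext.mk₀ κ) (add_zero 1)) rfl := by
    rw [← Ext.comp_assoc (Ext.mk₀ κ) ε δ (zero_add 1) rfl rfl, ← hδ,
      Ext.comp_assoc_of_second_deg_zero, hε]
  rw [Ext.comp_assoc_of_second_deg_zero, κ_comp_eq]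
  exact (Ext.comp_assoc ε δ _ rfl rfl rfl).symm

lemma comp_self_eq_zero_of_exchange
    (hδ : δ.comp (Ext.mk₀ ρ) (add_zero 1) = (Ext.mk₀ κ).comp ε (zero_add 1))
    (hρκ : ρ ≫ κ = 0) :
    (ε.comp (Ext.mk₀ κ) (add_zero 1)).comp (ε.comp (Ext.mk₀ κ) (add_zero 1)) (rfl : _ = 2) =
      0 := by
  have κ_comp_eq_zero : (Ext.mk₀ κ).comp (ε.comp (Ext.mk₀ κ) (add_zero 1)) (zero_add 1) = 0 := by
    rw [← Ext.comp_assoc (Ext.mk₀ κ) ε _ (zero_add 1) rfl rfl, ← hδ,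
      Ext.comp_assoc_of_second_deg_zero, Ext.mk₀_comp_mk₀, hρκ, Ext.mk₀_zero, Ext.comp_zero]
  rw [Ext.comp_assoc_of_second_deg_zero, κ_comp_eq_zero, Ext.comp_zero]

end Exchange

/-- The class `t ^ (m / 2) u ^ (m % 2)` of degree `m`. -/
def periodicClass (u : Ext Z Z 1) (t : Ext Z Z 2) : (m : ℕ) → Ext Z Z m
  | 0 => Ext.mk₀ (𝟙 Z)
  | 1 => u
  | m + 2 => t.comp (periodicClass u t m) (Nat.add_comm 2 m)

variable {u : Ext Z Z 1} {t : Ext Z Z 2}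

lemma comp_periodicClass (huu : u.comp u rfl = 0)
    (hut : u.comp t (rfl : _ = 3) = t.comp u rfl) :
    ∀ (b c : ℕ) (h : 1 + b = c),
      u.comp (periodicClass u t b) h = if Odd b then 0 else periodicClass u t c
  | 0, _, rfl => by simp [periodicClass]
  | 1, _, rfl => by simpa [periodicClass] using huu
  | b + 2, c, h => by
    obtain rfl : c = (1 + b) + 2 := by lia
    rw [periodicClass, periodicClass, ← Ext.comp_assoc u t _ (rfl : _ = 3) _ (by lia), hut,
      Ext.comp_assoc t u _ _ (rfl : _ = 1 + b) (by lia), comp_periodicClass huu hut b _ rfl]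
    simp only [Nat.odd_add, even_two, iff_true]
    split_ifs
    · exact Ext.comp_zero ..
    · rfl

lemma periodicClass_comp_periodicClass (huu : u.comp u rfl = 0)
    (hut : u.comp t (rfl : _ = 3) = t.comp u rfl) :
    ∀ (a b c : ℕ) (h : a + b = c), (periodicClass u t a).comp (periodicClass u t b) h =
      if Odd a ∧ Odd b then 0 else periodicClass u t c
  | 0, b, c, h => by
    obtain rfl : b = c := by lia
    simp [periodicClass]
  | 1, b, c, h => by simpa [periodicClass] using comp_periodicClass huu hut b c h
  | a + 2, b, c, h => by
    obtain rfl : c = (a + b) + 2 := by lia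
    rw [periodicClass, periodicClass, Ext.comp_assoc t _ _ _ (rfl : _ = a + b) (by lia),
      periodicClass_comp_periodicClass huu hut a b _ rfl]
    simp only [Nat.odd_add, even_two, iff_true]
    split_ifs
    · exact Ext.comp_zero ..
    · rfl

section Linear

variable {S : Type*} [Ring S] [Linear S C]

lemma exists_smul_periodicClass_eq (h0 : ∀ α : Ext Z Z 0, ∃ s : S, s • Ext.mk₀ (𝟙 Z) = α)
    (h1 : ∀ α : Ext Z Z 1, ∃ s : S, s • u = α)
    (ht : ∀ (m : ℕ) (β : Ext Z Z (m + 2)), ∃ α, t.comp α (Nat.add_comm 2 m) = β) :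
    ∀ (m : ℕ) (α : Ext Z Z m), ∃ s : S, s • periodicClass u t m = α
  | 0, α => h0 α
  | 1, α => h1 α
  | m + 2, β => by
    obtain ⟨α, rfl⟩ := ht m β
    obtain ⟨s, rfl⟩ := exists_smul_periodicClass_eq h0 h1 ht m α
    exact ⟨s, (Ext.comp_smul _ _ _ _).symm⟩

lemma smul_periodicClass_eq_zero_iff {s : S} {p : Prop} (h1 : s • u = 0 ↔ p) (h2 : s • t = 0 ↔ p)
    (ht : ∀ (m : ℕ) (α : Ext Z Z (m + 1)), t.comp α (Nat.add_comm 2 (m + 1)) = 0 ↔ α = 0) :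
    ∀ m : ℕ, s • periodicClass u t (m + 1) = 0 ↔ p
  | 0 => h1
  | 1 => by rwa [periodicClass, periodicClass, Ext.comp_mk₀_id]
  | m + 2 => by
    rw [periodicClass, ← Ext.comp_smul, ht, smul_periodicClass_eq_zero_iff h1 h2 ht m]

end Linear

end YonedaProducts

namespace IsExactPair

variable {S Z K : Type u} [CommRing S] [AddCommGroup Z] [Module S Z] [AddCommGroup K] [Module S K]
  {d N : S} {z : Z} {q : K}

/-- The embedding of `Z = S ⧸ (d)` into `S` with image `(N)`, sending the generator to `N`. -/
def inclusion (h : IsExactPair d N) (hz : IsCyclicGenerator d z) : Z →ₗ[S] S :=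
  (hz.exists_linearMap N h.mul_eq_zero).choose

lemma inclusion_apply_generator (h : IsExactPair d N) (hz : IsCyclicGenerator d z) :
    h.inclusion hz z = N :=
  (hz.exists_linearMap N h.mul_eq_zero).choose_spec

lemma inclusion_smul_generator (h : IsExactPair d N) (hz : IsCyclicGenerator d z) (r : S) :
    h.inclusion hz (r • z) = N * r := by
  rw [map_smul, h.inclusion_apply_generator, smul_eq_mul, mul_comm]

/-- The short complex `Z ⟶ S ⟶ K`, `z ↦ N`, `1 ↦ q`, attached to an exact pair `(d, N)` and
cyclic modules `Z = S ⧸ (d)` and `K = S ⧸ (N)`. -/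
def shortComplex (h : IsExactPair d N) (hz : IsCyclicGenerator d z)
    (hq : IsCyclicGenerator N q) : ShortComplex (ModuleCat.{u} S) :=
  .mk (ModuleCat.ofHom (h.inclusion hz))
    (ModuleCat.ofHom (LinearMap.toSpanSingleton S K q)) (by
      refine ModuleCat.hom_ext (hz.linearMap_ext ?_)
      change h.inclusion hz z • q = 0
      rw [h.inclusion_apply_generator, hq.smul_eq_zero])

lemma shortComplex_shortExact (h : IsExactPair d N) (hz : IsCyclicGenerator d z)
    (hq : IsCyclicGenerator N q) : (h.shortComplex hz hq).ShortExact := by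
  refine ShortComplex.ShortExact.mk' ?_ ?_ ?_
  · rw [ShortComplex.ShortExact.moduleCat_exact_iff_function_exact]
    intro (s : S)
    change s • q = 0 ↔ s ∈ Set.range (h.inclusion hz)
    rw [hq.smul_eq_zero_iff]
    constructor
    · rintro ⟨r, rfl⟩
      exact ⟨r • z, h.inclusion_smul_generator hz r⟩
    · rintro ⟨y, rfl⟩
      obtain ⟨r, rfl⟩ := hz.exists_smul_eq y
      exact ⟨r, h.inclusion_smul_generator hz r⟩
  · refine (ModuleCat.mono_iff_injective _).2 ((injective_iff_map_eq_zero (h.inclusion hz)).2 ?_)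
    intro y hy
    obtain ⟨r, rfl⟩ := hz.exists_smul_eq y
    rwa [h.inclusion_smul_generator hz, h.mul_right_eq_zero_iff, ← hz.smul_eq_zero_iff] at hy
  · exact (ModuleCat.epi_iff_surjective _).2 hq.exists_smul_eq

variable [HasExt.{w} (ModuleCat.{u} S)]

/-- The class in `Ext¹(K, Z)` of the extension `0 → Z → S → K → 0`. -/
def extClass (h : IsExactPair d N) (hz : IsCyclicGenerator d z) (hq : IsCyclicGenerator N q) :
    Ext (ModuleCat.of S K) (ModuleCat.of S Z) 1 :=
  (h.shortComplex_shortExact hz hq).extClass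

variable (h : IsExactPair d N) (hz : IsCyclicGenerator d z) (hq : IsCyclicGenerator N q)
  {Y : ModuleCat.{u} S}

instance : Projective (h.shortComplex hz hq).X₂ :=
  inferInstanceAs (Projective (ModuleCat.of S S))

lemma extClass_comp_surjective {m l : ℕ} (hl : 1 + m = l) (β : Ext (ModuleCat.of S K) Y l) :
    ∃ α, (h.extClass hz hq).comp α hl = β :=
  TruncatedHochschild.extClass_comp_surjective (h.shortComplex_shortExact hz hq) hl β

lemma extClass_comp_eq_zero_iff {m l : ℕ} (hm : 1 ≤ m) (hl : 1 + m = l)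
    (α : Ext (ModuleCat.of S Z) Y m) : (h.extClass hz hq).comp α hl = 0 ↔ α = 0 :=
  TruncatedHochschild.extClass_comp_eq_zero_iff (h.shortComplex_shortExact hz hq) hm hl α

lemma extClass_comp_mk₀_eq_zero_iff (f : ModuleCat.of S Z ⟶ Y) :
    (h.extClass hz hq).comp (Ext.mk₀ f) (add_zero 1) = 0 ↔ ∃ y : Y, N • y = f.hom z := by
  refine (TruncatedHochschild.extClass_comp_mk₀_eq_zero_iff
    (h.shortComplex_shortExact hz hq) f).trans ?_
  constructor
  · rintro ⟨(g : ModuleCat.of S S ⟶ Y), rfl⟩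
    have hN : N • (1 : S) = h.inclusion hz z := by
      rw [h.inclusion_apply_generator, smul_eq_mul, mul_one]
    exact ⟨g.hom (1 : S), (map_smul g.hom N (1 : S)).symm.trans (congrArg g.hom hN)⟩
  · rintro ⟨y, hy⟩
    refine ⟨ModuleCat.ofHom (LinearMap.toSpanSingleton S Y y),
      ModuleCat.hom_ext (hz.linearMap_ext ?_)⟩
    change h.inclusion hz z • y = f.hom z
    rw [h.inclusion_apply_generator, hy]

lemma extClass_naturality {Z' K' : Type u} [AddCommGroup Z'] [Module S Z'] [AddCommGroup K']
    [Module S K'] {d' N' : S} {z' : Z'} {q' : K'} (h' : IsExactPair d' N')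
    (hz' : IsCyclicGenerator d' z') (hq' : IsCyclicGenerator N' q') {a b : S}
    (hab : a * N' = b * N) {f : Z →ₗ[S] Z'} {g : K →ₗ[S] K'} (hf : f z = a • z')
    (hg : g q = b • q') :
    (h.extClass hz hq).comp (Ext.mk₀ (ModuleCat.ofHom f)) (add_zero 1) =
      (Ext.mk₀ (ModuleCat.ofHom g)).comp (h'.extClass hz' hq') (zero_add 1) := by
  refine ShortComplex.ShortExact.extClass_naturality (h.shortComplex_shortExact hz hq)
    (h'.shortComplex_shortExact hz' hq')
    { τ₁ := ModuleCat.ofHom f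
      τ₂ := ModuleCat.ofHom (LinearMap.mul S S b)
      τ₃ := ModuleCat.ofHom g
      comm₁₂ := ModuleCat.hom_ext (hz.linearMap_ext ?_)
      comm₂₃ := ModuleCat.hom_ext (LinearMap.ext_ring ?_) }
  · change h'.inclusion hz' (f z) = b * h.inclusion hz z
    rw [hf, map_smul, h'.inclusion_apply_generator, h.inclusion_apply_generator, smul_eq_mul, hab]
  · change (b * 1) • q' = g ((1 : S) • q)
    rw [mul_one, one_smul, hg]

/-- The degree-two periodicity class of `Z`: the Yoneda splice of
`0 → K → S → Z → 0` and `0 → Z → S → K → 0`. -/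
def degreeTwoClass : Ext (ModuleCat.of S Z) (ModuleCat.of S Z) 2 :=
  (h.symm.extClass hq hz).comp (h.extClass hz hq) rfl

/-- The degree-one class of `Z` obtained by pushing `0 → K → S → Z → 0` out along
`κ : K → Z`. -/
def degreeOneClass (κ : K →ₗ[S] Z) : Ext (ModuleCat.of S Z) (ModuleCat.of S Z) 1 :=
  (h.symm.extClass hq hz).comp (Ext.mk₀ (ModuleCat.ofHom κ)) (add_zero 1)

lemma degreeTwoClass_comp {m l : ℕ} (hl : 2 + m = l) (α : Ext (ModuleCat.of S Z) Y m) :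
    (h.degreeTwoClass hz hq).comp α hl =
      (h.symm.extClass hq hz).comp ((h.extClass hz hq).comp α rfl) (by lia) :=
  Ext.comp_assoc _ _ _ _ _ (by lia)

lemma degreeTwoClass_comp_surjective {m l : ℕ} (hl : 2 + m = l)
    (β : Ext (ModuleCat.of S Z) Y l) : ∃ α, (h.degreeTwoClass hz hq).comp α hl = β := by
  obtain ⟨γ, rfl⟩ := h.symm.extClass_comp_surjective hq hz (show 1 + (1 + m) = l by lia) β
  obtain ⟨α, rfl⟩ := h.extClass_comp_surjective hz hq rfl γ
  exact ⟨α, h.degreeTwoClass_comp hz hq hl α⟩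

lemma degreeTwoClass_comp_eq_zero_iff {m l : ℕ} (hm : 1 ≤ m) (hl : 2 + m = l)
    (α : Ext (ModuleCat.of S Z) Y m) : (h.degreeTwoClass hz hq).comp α hl = 0 ↔ α = 0 := by
  rw [degreeTwoClass_comp, h.symm.extClass_comp_eq_zero_iff hq hz (by lia),
    h.extClass_comp_eq_zero_iff hz hq hm]

lemma smul_degreeTwoClass_eq_zero_iff (s : S) :
    s • h.degreeTwoClass hz hq = 0 ↔ ∃ y : Z, N • y = s • z := by
  have smul_eq : s • h.degreeTwoClass hz hq = (h.symm.extClass hq hz).comp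
      ((h.extClass hz hq).comp (Ext.mk₀ (s • 𝟙 (ModuleCat.of S Z))) (add_zero 1)) rfl := by
    rw [Ext.mk₀_smul, Ext.comp_smul, Ext.comp_smul, Ext.comp_mk₀_id, degreeTwoClass]
  rw [smul_eq, h.symm.extClass_comp_eq_zero_iff hq hz le_rfl]
  exact h.extClass_comp_mk₀_eq_zero_iff hz hq _

lemma smul_degreeOneClass (κ : K →ₗ[S] Z) (s : S) :
    s • h.degreeOneClass hz hq κ = h.degreeOneClass hz hq (s • κ) := by
  change _ = Ext.comp _ (Ext.mk₀ (s • ModuleCat.ofHom κ)) _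
  rw [Ext.mk₀_smul, Ext.comp_smul, degreeOneClass]

lemma smul_degreeOneClass_eq_zero_iff (κ : K →ₗ[S] Z) (s : S) :
    s • h.degreeOneClass hz hq κ = 0 ↔ s • κ q = 0 := by
  rw [h.smul_degreeOneClass]
  refine (h.symm.extClass_comp_mk₀_eq_zero_iff hq hz _).trans ?_
  change (∃ y : Z, d • y = s • κ q) ↔ s • κ q = 0
  simp only [hz.smul_eq_zero, exists_const, eq_comm]

lemma exists_smul_degreeOneClass_eq {κ : K →ₗ[S] Z}
    (hκ : ∀ y : Z, N • y = 0 → ∃ s : S, s • κ q = y)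
    (β : Ext (ModuleCat.of S Z) (ModuleCat.of S Z) 1) :
    ∃ s : S, s • h.degreeOneClass hz hq κ = β := by
  obtain ⟨γ, rfl⟩ := h.symm.extClass_comp_surjective hq hz (add_zero 1) β
  obtain ⟨f, rfl⟩ := (Ext.mk₀_bijective _ _).2 γ
  obtain ⟨s, hs⟩ := hκ (f.hom q) (by rw [← map_smul, hq.smul_eq_zero, map_zero])
  have smul_κ_eq : s • κ = f.hom := hq.linearMap_ext hs
  exact ⟨s, by rw [smul_degreeOneClass, smul_κ_eq]; rfl⟩

end IsExactPair

section PeriodicExt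

variable {S Z : Type u} [CommRing S] [CommRing Z] [Algebra S Z] [HasExt.{w} (ModuleCat.{u} S)]
  {d N w v : S}

lemma smul_mk₀_id_eq_zero_iff (s : S) :
    s • Ext.mk₀ (𝟙 (ModuleCat.of S Z)) = 0 ↔ algebraMap S Z s = 0 := by
  rw [← Ext.mk₀_smul, Ext.mk₀_eq_zero_iff, Algebra.algebraMap_eq_smul_one]
  constructor
  · exact fun h => LinearMap.congr_fun (congrArg ModuleCat.Hom.hom h) (1 : Z)
  · refine fun h => ModuleCat.hom_ext (LinearMap.ext fun (y : Z) => ?_)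
    change s • y = 0
    rw [← one_mul y, ← smul_mul_assoc, h, zero_mul]

lemma exists_smul_mk₀_id_eq (hsurj : Function.Surjective (algebraMap S Z))
    (α : Ext (ModuleCat.of S Z) (ModuleCat.of S Z) 0) :
    ∃ s : S, s • Ext.mk₀ (𝟙 (ModuleCat.of S Z)) = α := by
  obtain ⟨f, rfl⟩ := (Ext.mk₀_bijective _ _).2 α
  obtain ⟨s, hs⟩ := hsurj (f.hom (1 : Z))
  refine ⟨s, ?_⟩
  rw [← Ext.mk₀_smul]
  congr 1
  refine ModuleCat.hom_ext (LinearMap.ext fun (y : Z) => ?_)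
  obtain ⟨r, rfl⟩ := hsurj y
  change s • algebraMap S Z r = f.hom (algebraMap S Z r)
  rw [Algebra.algebraMap_eq_smul_one r, map_smul, ← hs, smul_comm,
    Algebra.algebraMap_eq_smul_one s]

theorem exists_periodicClass_generators (hsurj : Function.Surjective (algebraMap S Z))
    (hker : RingHom.ker (algebraMap S Z) = Ideal.span {d}) (h : IsExactPair d N)
    (hw : IsExactPair (algebraMap S Z w) (algebraMap S Z N)) (hv : d * v = w * N)
    (hwv : algebraMap S Z (w * v) = 0) :
    ∃ (u : Ext (ModuleCat.of S Z) (ModuleCat.of S Z) 1)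
      (t : Ext (ModuleCat.of S Z) (ModuleCat.of S Z) 2),
      u.comp u (rfl : _ = 2) = 0 ∧ u.comp t (rfl : _ = 3) = t.comp u rfl ∧
      (∀ m α, ∃ s : S, s • periodicClass u t m = α) ∧
      ∀ m (s : S), s • periodicClass u t (m + 1) = 0 ↔ algebraMap S Z (w * s) = 0 := by
  have hz := IsCyclicGenerator.algebra_one hsurj hker
  have hq := IsCyclicGenerator.quotient_one N
  have smul_one_eq (r s : S) : r • s • (1 : Z) = algebraMap S Z (r * s) := by
    rw [smul_smul, Algebra.algebraMap_eq_smul_one]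
  obtain ⟨κ, hκ⟩ := hq.exists_linearMap (w • (1 : Z)) (by
    rw [smul_one_eq, mul_comm, map_mul, hw.mul_eq_zero])
  obtain ⟨ρ, hρ⟩ := hz.exists_linearMap (v • (1 : S ⧸ Ideal.span {N})) (by
    rw [smul_smul, hv, mul_smul, hq.smul_eq_zero, smul_zero])
  have hδ := h.extClass_naturality hz hq h.symm hq hz (a := v) (b := w) (by rw [mul_comm, hv])
    hρ hκ
  have hε := h.symm.extClass_naturality hq hz h hz hq (a := w) (b := v) (by rw [← hv, mul_comm])
    hκ hρ
  have hρκ : ModuleCat.ofHom ρ ≫ ModuleCat.ofHom κ = 0 := by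
    refine ModuleCat.hom_ext (hz.linearMap_ext ?_)
    change κ (ρ 1) = 0
    rw [hρ, map_smul, hκ, smul_one_eq, mul_comm, hwv]
  have exists_smul_κ (y : Z) (hy : N • y = 0) : ∃ s : S, s • κ 1 = y := by
    rw [Algebra.smul_def, hw.mul_right_eq_zero_iff] at hy
    obtain ⟨y, rfl⟩ := hy
    obtain ⟨s, rfl⟩ := hsurj y
    exact ⟨s, by rw [hκ, smul_one_eq, mul_comm, map_mul]⟩
  refine ⟨h.degreeOneClass hz hq κ, h.degreeTwoClass hz hq,
    comp_self_eq_zero_of_exchange hδ hρκ, comp_comm_of_exchange hδ hε,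
    exists_smul_periodicClass_eq (exists_smul_mk₀_id_eq hsurj)
      (h.exists_smul_degreeOneClass_eq hz hq exists_smul_κ)
      (fun m => h.degreeTwoClass_comp_surjective hz hq _),
    fun m s => smul_periodicClass_eq_zero_iff ?_ ?_
      (fun m => h.degreeTwoClass_comp_eq_zero_iff hz hq m.succ_pos _) m⟩
  · rw [h.smul_degreeOneClass_eq_zero_iff, hκ, smul_one_eq, mul_comm]
  · rw [h.smul_degreeTwoClass_eq_zero_iff, map_mul, hw.mul_left_eq_zero_iff]
    simp only [Algebra.smul_def, mul_one, dvd_def, eq_comm]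

end PeriodicExt

section TensorAdjoinRoot

variable {k T : Type*} [CommRing k] [CommRing T] [Algebra k T]

/-- The evaluation `T[X] → T ⊗ k[x]/(f)`, `X ↦ 1 ⊗ x`, presenting the base change of
`k[x]/(f)` as a quotient of `T[X]`. -/
def evalRoot (T : Type*) [CommRing T] [Algebra k T] (f : k[X]) : T[X] →ₐ[T] T ⊗[k] AdjoinRoot f :=
  aeval (1 ⊗ₜ AdjoinRoot.root f)

lemma evalRoot_C (f : k[X]) (a : T) : evalRoot T f (C a) = a ⊗ₜ 1 :=
  aeval_C _ a

lemma evalRoot_eq_map_polyEquivTensor (f : k[X]) (P : T[X]) :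
    evalRoot T f P = Algebra.TensorProduct.map (AlgHom.id k T) (AdjoinRoot.mkₐ f)
      (polyEquivTensor k T P) := by
  have h : (evalRoot T f : T[X] →+* T ⊗[k] AdjoinRoot f) =
      ((Algebra.TensorProduct.map (AlgHom.id k T) (AdjoinRoot.mkₐ f)).comp
        (polyEquivTensor k T).toAlgHom : T[X] →+* T ⊗[k] AdjoinRoot f) := by
    refine Polynomial.ringHom_ext (fun a => ?_) ?_
    · simp [evalRoot_C]
    · simp [evalRoot]
  exact RingHom.congr_fun h P

lemma evalRoot_surjective (f : k[X]) : Function.Surjective (evalRoot T f) := by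
  intro b
  obtain ⟨c, rfl⟩ := Algebra.TensorProduct.map_surjective (AlgHom.id k T) (AdjoinRoot.mkₐ f)
    Function.surjective_id AdjoinRoot.mk_surjective b
  exact ⟨(polyEquivTensor k T).symm c, by
    rw [evalRoot_eq_map_polyEquivTensor, AlgEquiv.apply_symm_apply]⟩

lemma ker_evalRoot (f : k[X]) :
    RingHom.ker (evalRoot T f) = Ideal.span {f.map (algebraMap k T)} := by
  have ker_mk : RingHom.ker (AdjoinRoot.mkₐ f) = Ideal.span {f} := Ideal.mk_ker
  have ker_map : RingHom.ker (Algebra.TensorProduct.map (AlgHom.id k T) (AdjoinRoot.mkₐ f)) =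
      Ideal.span {(1 : T) ⊗ₜ[k] f} := by
    rw [Algebra.TensorProduct.lTensor_ker _ AdjoinRoot.mk_surjective, ker_mk, Ideal.map_span,
      Set.image_singleton, Algebra.TensorProduct.includeRight_apply]
  ext P
  rw [RingHom.mem_ker, evalRoot_eq_map_polyEquivTensor, ← RingHom.mem_ker, ker_map,
    Ideal.mem_span_singleton, Ideal.mem_span_singleton, ← map_dvd_iff (polyEquivTensor k T).symm,
    AlgEquiv.symm_apply_apply, polyEquivTensor_symm_apply_tmul_eq_smul, one_smul]

lemma lmul'_evalRoot (f : k[X]) (P : (AdjoinRoot f)[X]) :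
    Algebra.TensorProduct.lmul' k (evalRoot (AdjoinRoot f) f P) = P.eval (AdjoinRoot.root f) := by
  have h : ((Algebra.TensorProduct.lmul' k).toRingHom.comp
      (evalRoot (AdjoinRoot f) f).toRingHom) = evalRingHom (AdjoinRoot.root f) := by
    refine Polynomial.ringHom_ext (fun a => ?_) ?_
    · simp [evalRoot_C]
    · simp [evalRoot]
  exact RingHom.congr_fun h P

lemma ker_lmul' (f : k[X]) :
    RingHom.ker (Algebra.TensorProduct.lmul' k (S := AdjoinRoot f)) =
      Ideal.span {evalRoot (AdjoinRoot f) f (X - C (AdjoinRoot.root f))} := by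
  ext b
  obtain ⟨P, rfl⟩ := evalRoot_surjective f b
  rw [RingHom.mem_ker, Ideal.mem_span_singleton, lmul'_evalRoot]
  constructor
  · exact fun h => map_dvd _ (dvd_iff_isRoot.2 h)
  · rintro ⟨c, hc⟩
    rw [← lmul'_evalRoot, hc, map_mul, lmul'_evalRoot]
    simp

lemma isExactPair_evalRoot {f : k[X]} (hf : f.Monic) {P Q : T[X]}
    (hPQ : P * Q = f.map (algebraMap k T)) :
    IsExactPair (evalRoot T f P) (evalRoot T f Q) :=
  IsExactPair.of_isRegular_mul (φ := (evalRoot T f).toRingHom) (evalRoot_surjective f)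
    (hPQ ▸ (hf.map _).isRegular) (hPQ ▸ ker_evalRoot f)

end TensorAdjoinRoot

section GeomQuotient

variable {T : Type*} [CommRing T] {r : T} {n : ℕ}

/-- The quotient `(X ^ (n + 1) - r ^ (n + 1)) / (X - r)`, which is the cofactor of `X - r` in
`X ^ (n + 1)` when `r ^ (n + 1) = 0`. -/
def geomQuotient (r : T) (n : ℕ) : T[X] :=
  ∑ i ∈ Finset.range (n + 1), X ^ i * C (r ^ (n - i))

lemma X_sub_C_mul_geomQuotient (hr : r ^ (n + 1) = 0) :
    (X - C r) * geomQuotient r n = X ^ (n + 1) := by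
  have h := (Commute.all X (C r)).mul_geom_sum₂ (n + 1)
  simpa only [geomQuotient, ← C_pow, hr, C_0, sub_zero, Nat.add_sub_cancel] using h

lemma eval_geomQuotient (r : T) (n : ℕ) : (geomQuotient r n).eval r = (n + 1) * r ^ n := by
  have h := geom_sum₂_self r (n + 1)
  simpa [geomQuotient, eval_finsetSum] using h

lemma mul_eval_derivative_geomQuotient (r : T) (n : ℕ) :
    r * (derivative (geomQuotient r n)).eval r = (∑ i ∈ Finset.range (n + 1), (i : T)) * r ^ n := by
  rw [geomQuotient, derivative_sum, eval_finsetSum, Finset.mul_sum, Finset.sum_mul]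
  refine Finset.sum_congr rfl fun i hi => ?_
  obtain ⟨j, rfl⟩ := Nat.exists_eq_add_of_le (Nat.le_of_lt_succ (Finset.mem_range.1 hi))
  have mul_pow_pred : (i : T) * (r * r ^ (i - 1)) = i * r ^ i := by
    cases i <;> simp [pow_succ']
  rw [Nat.add_sub_cancel_left, derivative_mul, derivative_C, mul_zero, add_zero, derivative_X_pow,
    eval_mul, eval_mul, eval_C, eval_C, eval_pow, eval_X, pow_add]
  linear_combination r ^ j * mul_pow_pred

lemma exists_X_sub_C_mul_eq (hr : r ^ (n + 1) = 0) :
    ∃ V : T[X], (X - C r) * V = C r * geomQuotient r n ∧ r * V.eval r = 0 := by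
  have hroot : (C r * geomQuotient r n).IsRoot r := by
    rw [IsRoot, eval_mul, eval_C, eval_geomQuotient]
    linear_combination (n + 1) * hr
  obtain ⟨V, hV⟩ := dvd_iff_isRoot.2 hroot
  have eval_V : V.eval r = r * (derivative (geomQuotient r n)).eval r := by
    simpa using (congrArg (fun P => (derivative P).eval r) hV).symm
  refine ⟨V, hV.symm, ?_⟩
  rw [eval_V, mul_eval_derivative_geomQuotient]
  linear_combination (∑ i ∈ Finset.range (n + 1), (i : T)) * hr

end GeomQuotient

section Truncated

variable {k : Type*} [CommRing k] (n : ℕ)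

lemma root_X_pow_pow_eq_zero : AdjoinRoot.root ((X : k[X]) ^ n) ^ n = 0 := by
  rw [← AdjoinRoot.mk_X, ← map_pow, AdjoinRoot.mk_self]

lemma isExactPair_root_root_pow :
    IsExactPair (AdjoinRoot.root ((X : k[X]) ^ (n + 1)))
      (AdjoinRoot.root ((X : k[X]) ^ (n + 1)) ^ n) := by
  rw [← AdjoinRoot.mk_X, ← map_pow]
  refine IsExactPair.of_isRegular_mul AdjoinRoot.mk_surjective ?_ ?_
  · exact pow_succ' (X : k[X]) n ▸ (monic_X_pow (n + 1)).isRegular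
  · exact pow_succ' (X : k[X]) n ▸ Ideal.mk_ker

end Truncated

section HochschildExt

variable {k : Type} [Field k] {n : ℕ}

lemma algebraMap_tmul_one (a : A k n) : algebraMap (B k n) (A k n) (a ⊗ₜ 1) = a :=
  mul_one a

theorem exists_periodicClass_generators_truncated (hn : (n : k) + 1 ≠ 0) :
    ∃ (u : Ext (M k n) (M k n) 1) (t : Ext (M k n) (M k n) 2),
      u.comp u (rfl : _ = 2) = 0 ∧ u.comp t (rfl : _ = 3) = t.comp u rfl ∧
      (∀ m α, ∃ s : B k n, s • periodicClass u t m = α) ∧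
      ∀ m (s : B k n), s • periodicClass u t (m + 1) = 0 ↔
        AdjoinRoot.root ((X : k[X]) ^ (n + 1)) * algebraMap (B k n) (A k n) s = 0 := by
  set x := AdjoinRoot.root ((X : k[X]) ^ (n + 1))
  have hx_pow : x ^ (n + 1) = 0 := root_X_pow_pow_eq_zero (n + 1)
  let ev := evalRoot (A k n) ((X : k[X]) ^ (n + 1))
  have algebraMap_ev (P : (A k n)[X]) : algebraMap (B k n) (A k n) (ev P) = P.eval x :=
    lmul'_evalRoot _ P
  obtain ⟨V, hV, hxV⟩ := exists_X_sub_C_mul_eq hx_pow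
  have isUnit_natCast : IsUnit ((n : A k n) + 1) := by
    simpa using hn.isUnit.map (algebraMap k (A k n))
  have h : IsExactPair (ev (X - C x)) (ev (geomQuotient x n)) :=
    isExactPair_evalRoot (monic_X_pow (n + 1)) (by
      rw [X_sub_C_mul_geomQuotient hx_pow, Polynomial.map_pow, map_X])
  have hw : IsExactPair (algebraMap (B k n) (A k n) (ev (C x)))
      (algebraMap (B k n) (A k n) (ev (geomQuotient x n))) := by
    rw [algebraMap_ev, algebraMap_ev, eval_C, eval_geomQuotient]
    exact (isExactPair_root_root_pow n).unit_mul_right isUnit_natCast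
  have hwv : algebraMap (B k n) (A k n) (ev (C x) * ev V) = 0 := by
    rw [← map_mul, algebraMap_ev, eval_mul, eval_C, hxV]
  have generators := exists_periodicClass_generators
    (fun a => ⟨a ⊗ₜ 1, algebraMap_tmul_one a⟩) (ker_lmul' _) h hw
    (by rw [← map_mul, ← map_mul, hV]) hwv
  simp only [map_mul, algebraMap_ev, eval_C] at generators
  exact generators

end HochschildExt

section TargetRing

variable {k : Type} [Field k] {n : ℕ}

lemma mem_I_iff {P : MvPolynomial (Fin 3) k} : P ∈ I k n ↔ ∀ s ∈ P.support,
    n + 1 ≤ s 0 ∨ 2 ≤ s 1 ∨ (n ≤ s 0 ∧ 1 ≤ s 2) ∨ (n ≤ s 0 ∧ 1 ≤ s 1) := by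
  let gens : Set (Fin 3 →₀ ℕ) := {.single 0 (n + 1), .single 1 2, .single 0 n + .single 2 1,
    .single 1 1 + .single 0 n}
  have I_eq : I k n = Ideal.span ((fun s => MvPolynomial.monomial s (1 : k)) '' gens) := by
    simp only [I, gens, Set.image_insert_eq, Set.image_singleton, MvPolynomial.X,
      MvPolynomial.monomial_pow, MvPolynomial.monomial_mul, one_pow, mul_one]
    simp
  rw [I_eq, MvPolynomial.mem_ideal_span_monomial_image]
  simp [gens, Finsupp.le_def, Fin.forall_fin_succ]

variable (k) in
/-- The monomial `u ^ (m % 2) t ^ (m / 2)`, which spans the degree-`m` part over `k[x]`. -/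
def periodicMonomial (m : ℕ) : MvPolynomial (Fin 3) k :=
  MvPolynomial.X 1 ^ (m % 2) * MvPolynomial.X 2 ^ (m / 2)

lemma periodicMonomial_mul_of_not_odd {a b : ℕ} (h : ¬(Odd a ∧ Odd b)) :
    periodicMonomial k a * periodicMonomial k b = periodicMonomial k (a + b) := by
  rw [Nat.odd_iff, Nat.odd_iff] at h
  rw [periodicMonomial, periodicMonomial, periodicMonomial, mul_mul_mul_comm, ← pow_add, ← pow_add]
  congr 2 <;> lia

lemma periodicMonomial_mul_mem_I {a b : ℕ} (ha : Odd a) (hb : Odd b) :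
    periodicMonomial k a * periodicMonomial k b ∈ I k n := by
  have X_one_sq_mem : (MvPolynomial.X 1 : MvPolynomial (Fin 3) k) ^ 2 ∈ I k n :=
    Ideal.subset_span (by simp)
  rw [periodicMonomial, periodicMonomial, mul_mul_mul_comm, ← pow_add, Nat.odd_iff.1 ha,
    Nat.odd_iff.1 hb]
  exact Ideal.mul_mem_right _ _ X_one_sq_mem

lemma monomial_eq_aeval_mul_periodicMonomial {s : Fin 3 →₀ ℕ} {m : ℕ} (h1 : s 1 = m % 2)
    (h2 : s 2 = m / 2) (c : k) :
    MvPolynomial.monomial s c =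
      aeval (MvPolynomial.X 0) (monomial (s 0) c) * periodicMonomial k m := by
  rw [MvPolynomial.monomial_eq, Finsupp.prod_fintype _ _ fun i => pow_zero _, Fin.prod_univ_three,
    aeval_monomial, periodicMonomial, h1, h2, MvPolynomial.algebraMap_eq]
  ring

lemma coeff_aeval_mul_periodicMonomial (q : k[X]) (m : ℕ) (s : Fin 3 →₀ ℕ) :
    (aeval (MvPolynomial.X 0 : MvPolynomial (Fin 3) k) q * periodicMonomial k m).coeff s =
      if s 1 = m % 2 ∧ s 2 = m / 2 then q.coeff (s 0) else 0 := by
  induction q using Polynomial.induction_on' with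
  | add p q hp hq =>
    rw [map_add, add_mul, MvPolynomial.coeff_add, hp, hq, coeff_add]
    split_ifs
    · rfl
    · exact add_zero 0
  | monomial i c =>
    let r : Fin 3 →₀ ℕ := Finsupp.equivFunOnFinite.symm ![i, m % 2, m / 2]
    have r_eq_iff : r = s ↔ i = s 0 ∧ m % 2 = s 1 ∧ m / 2 = s 2 := by
      simp [Finsupp.ext_iff, Fin.forall_fin_succ, r]
    have monomial_r : MvPolynomial.monomial r c =
        aeval (MvPolynomial.X 0) (monomial i c) * periodicMonomial k m :=
      monomial_eq_aeval_mul_periodicMonomial rfl rfl c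
    rw [← monomial_r, MvPolynomial.coeff_monomial, coeff_monomial]
    grind

/-- The exponent `e` for which `x ^ e` generates the annihilator in `k[x]` of the degree-`m`
part. -/
def annihilatorExponent (n : ℕ) : ℕ → ℕ
  | 0 => n + 1
  | _ + 1 => n

lemma weight_eq (s : Fin 3 →₀ ℕ) : Finsupp.weight (![0, 1, 2] : Fin 3 → ℕ) s = s 1 + 2 * s 2 := by
  simp [Finsupp.weight_apply, Finsupp.sum_fintype, Fin.sum_univ_three, mul_comm]

lemma aeval_mul_periodicMonomial_isWeightedHomogeneous (q : k[X]) (m : ℕ) :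
    (aeval (MvPolynomial.X 0 : MvPolynomial (Fin 3) k) q * periodicMonomial k m
      ).IsWeightedHomogeneous (![0, 1, 2] : Fin 3 → ℕ) m := by
  intro s hs
  rw [coeff_aeval_mul_periodicMonomial] at hs
  obtain ⟨h1, h2⟩ := (ite_ne_right_iff.1 hs).1
  rw [weight_eq, h1, h2, Nat.mod_add_div]

lemma aeval_mul_periodicMonomial_mem_I_iff (q : k[X]) (m : ℕ) :
    aeval (MvPolynomial.X 0) q * periodicMonomial k m ∈ I k n ↔
      X ^ annihilatorExponent n m ∣ q := by
  simp only [mem_I_iff, X_pow_dvd_iff, MvPolynomial.mem_support_iff,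
    coeff_aeval_mul_periodicMonomial, ite_ne_right_iff]
  constructor
  · intro h i hi
    by_contra hc
    have exponents_mem : n + 1 ≤ i ∨ 2 ≤ m % 2 ∨ (n ≤ i ∧ 1 ≤ m / 2) ∨ (n ≤ i ∧ 1 ≤ m % 2) :=
      h (Finsupp.equivFunOnFinite.symm ![i, m % 2, m / 2]) ⟨⟨rfl, rfl⟩, hc⟩
    cases m <;> simp only [annihilatorExponent] at hi <;> lia
  · rintro h s ⟨⟨h1, h2⟩, hc⟩
    have exponent_le := mt (h (s 0)) hc
    cases m <;> simp only [annihilatorExponent] at exponent_le <;> lia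

variable (n) in
/-- The map `q ↦ q(x) u ^ (m % 2) t ^ (m / 2)` onto the degree-`m` part of `R k n`. -/
def gradedEval (m : ℕ) : k[X] →ₗ[k] G k n m :=
  ((Ideal.Quotient.mkₐ k (I k n)).toLinearMap ∘ₗ LinearMap.mulRight k (periodicMonomial k m) ∘ₗ
    (aeval (MvPolynomial.X 0)).toLinearMap).codRestrict (G k n m) fun q =>
      Submodule.mem_map_of_mem (aeval_mul_periodicMonomial_isWeightedHomogeneous q m)

lemma coe_gradedEval (m : ℕ) (q : k[X]) : (gradedEval n m q : R k n) =
    Ideal.Quotient.mk (I k n) (aeval (MvPolynomial.X 0) q * periodicMonomial k m) :=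
  rfl

lemma gradedEval_eq_zero_iff (m : ℕ) (q : k[X]) :
    gradedEval n m q = 0 ↔ X ^ annihilatorExponent n m ∣ q := by
  rw [← aeval_mul_periodicMonomial_mem_I_iff, ← Ideal.Quotient.eq_zero_iff_mem, ← coe_gradedEval,
    ZeroMemClass.coe_eq_zero]

lemma coe_gradedEval_zero_one : (gradedEval n 0 (1 : k[X]) : R k n) = 1 := by
  simp [coe_gradedEval, periodicMonomial]

lemma mk_monomial_mem_range_gradedEval {s : Fin 3 →₀ ℕ} {m : ℕ} (hs : s 1 + 2 * s 2 = m) (c : k) :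
    Ideal.Quotient.mk (I k n) (MvPolynomial.monomial s c) ∈
      LinearMap.range ((G k n m).subtype ∘ₗ gradedEval n m) := by
  by_cases h : 2 ≤ s 1
  · have monomial_mem : MvPolynomial.monomial s c ∈ I k n := mem_I_iff.2 fun r hr =>
      .inr (.inl (Finset.mem_singleton.1 (MvPolynomial.support_monomial_subset hr) ▸ h))
    rw [Ideal.Quotient.eq_zero_iff_mem.2 monomial_mem]
    exact Submodule.zero_mem _
  · rw [monomial_eq_aeval_mul_periodicMonomial (m := m) (by lia) (by lia)]
    exact ⟨monomial (s 0) c, rfl⟩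

lemma gradedEval_surjective (m : ℕ) : Function.Surjective (gradedEval (k := k) n m) := by
  rintro ⟨_, P, hP, rfl⟩
  suffices h : Ideal.Quotient.mk (I k n) P ∈
      LinearMap.range ((G k n m).subtype ∘ₗ gradedEval n m) from
    h.imp fun _ => Subtype.ext
  rw [← MvPolynomial.support_sum_monomial_coeff P, map_sum]
  exact Submodule.sum_mem _ fun s hs => mk_monomial_mem_range_gradedEval
    (by rw [← weight_eq, hP (MvPolynomial.mem_support_iff.1 hs)]) _

lemma gradedEval_mul (a b : ℕ) (p q : k[X]) :
    (gradedEval n a p : R k n) * gradedEval n b q =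
      if Odd a ∧ Odd b then 0 else (gradedEval n (a + b) (p * q) : R k n) := by
  rw [coe_gradedEval, coe_gradedEval, coe_gradedEval, ← map_mul, mul_mul_mul_comm, ← map_mul]
  split_ifs with h
  · exact Ideal.Quotient.eq_zero_iff_mem.2
      (Ideal.mul_mem_left _ _ (periodicMonomial_mul_mem_I h.1 h.2))
  · rw [periodicMonomial_mul_of_not_odd h]

end TargetRing

section Comparison

lemma exists_addEquiv_of_eq_zero_iff {P E F : Type*} [AddCommGroup P] [AddCommGroup E]
    [AddCommGroup F] {f : P →+ E} {g : P →+ F} (hf : Function.Surjective f)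
    (hg : Function.Surjective g) (h : ∀ p, f p = 0 ↔ g p = 0) :
    ∃ e : E ≃+ F, ∀ p, e (f p) = g p := by
  let e := QuotientAddGroup.quotientKerEquivOfSurjective f hf
  refine ⟨e.symm.trans ((QuotientAddGroup.quotientAddEquivOfEq (AddSubgroup.ext h)).trans
    (QuotientAddGroup.quotientKerEquivOfSurjective g hg)), fun p => ?_⟩
  have symm_apply : e.symm (f p) = (p : P ⧸ f.ker) := e.symm_apply_eq.2 rfl
  rw [AddEquiv.trans_apply, symm_apply]
  rfl

variable {k : Type} [Field k] {n : ℕ} (u : Ext (M k n) (M k n) 1) (t : Ext (M k n) (M k n) 2)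

/-- The map `q ↦ q(x) u ^ (m % 2) t ^ (m / 2)` into Hochschild cohomology, with `x` acting through
the left tensor factor. -/
def extEval (m : ℕ) : k[X] →+ Ext (M k n) (M k n) m :=
  (AddMonoidHom.flip (AddMonoidHom.smul : B k n →+ _) (periodicClass u t m)).comp
    ((Algebra.TensorProduct.includeLeft (S := k) (A := A k n) (B := A k n)).toAddMonoidHom.comp
      (AdjoinRoot.mk ((X : k[X]) ^ (n + 1))).toAddMonoidHom)

lemma extEval_apply (m : ℕ) (q : k[X]) :
    extEval u t m q = (AdjoinRoot.mk (X ^ (n + 1)) q ⊗ₜ 1 : B k n) • periodicClass u t m :=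
  rfl

variable {u t}

lemma smul_periodicClass_zero_eq_zero_iff (s : B k n) :
    s • periodicClass u t 0 = 0 ↔ algebraMap (B k n) (A k n) s = 0 :=
  smul_mk₀_id_eq_zero_iff s

lemma extEval_surjective {m : ℕ} (hgen : ∀ α, ∃ s : B k n, s • periodicClass u t m = α)
    (hker : ∀ s : B k n, algebraMap (B k n) (A k n) s = 0 → s • periodicClass u t m = 0) :
    Function.Surjective (extEval u t m) := by
  intro α
  obtain ⟨s, rfl⟩ := hgen α
  obtain ⟨q, hq⟩ := AdjoinRoot.mk_surjective (algebraMap (B k n) (A k n) s)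
  refine ⟨q, ?_⟩
  rw [extEval_apply, ← sub_eq_zero, ← sub_smul]
  exact hker _ (by rw [map_sub, algebraMap_tmul_one, hq, sub_self])

lemma extEval_zero_eq_zero_iff (q : k[X]) : extEval u t 0 q = 0 ↔ X ^ (n + 1) ∣ q := by
  rw [extEval_apply, smul_periodicClass_zero_eq_zero_iff, algebraMap_tmul_one,
    AdjoinRoot.mk_eq_zero]

lemma extEval_succ_eq_zero_iff {m : ℕ} (hker : ∀ s : B k n,
      s • periodicClass u t (m + 1) = 0 ↔
        AdjoinRoot.root ((X : k[X]) ^ (n + 1)) * algebraMap (B k n) (A k n) s = 0) (q : k[X]) :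
    extEval u t (m + 1) q = 0 ↔ X ^ n ∣ q := by
  rw [extEval_apply, hker, algebraMap_tmul_one, ← AdjoinRoot.mk_X, ← map_mul,
    AdjoinRoot.mk_eq_zero, pow_succ', mul_dvd_mul_iff_left X_ne_zero]

lemma extEval_zero_one : extEval u t 0 1 = Ext.mk₀ (𝟙 (M k n)) := by
  rw [extEval_apply, map_one]
  exact one_smul _ _

lemma extEval_comp (huu : u.comp u (rfl : _ = 2) = 0)
    (hut : u.comp t (rfl : _ = 3) = t.comp u rfl) (a b : ℕ) (p q : k[X]) :
    (extEval u t a p).comp (extEval u t b q) rfl =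
      if Odd a ∧ Odd b then 0 else extEval u t (a + b) (p * q) := by
  rw [extEval_apply, extEval_apply, extEval_apply, Ext.smul_comp, Ext.comp_smul,
    periodicClass_comp_periodicClass huu hut a b _ rfl, smul_smul, map_mul,
    Algebra.TensorProduct.tmul_mul_tmul, mul_one]
  split_ifs
  · exact smul_zero _
  · rfl

end Comparison

end TruncatedHochschild

open TruncatedHochschild in
theorem stmt9_general (k : Type) [Field k] (n : ℕ) (hn : (n : k) + 1 ≠ 0) :
    ∃ e : ∀ m : ℕ, Abelian.Ext (M k n) (M k n) m ≃+ G k n m,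
      ((e 0 (Abelian.Ext.mk₀ (𝟙 (M k n))) : R k n) = 1) ∧
      ∀ (a b : ℕ) (α : Abelian.Ext (M k n) (M k n) a) (β : Abelian.Ext (M k n) (M k n) b),
        ((e (a + b) (α.comp β rfl) : R k n) = (e a α : R k n) * (e b β : R k n)) := by
  obtain ⟨u, t, huu, hut, generates, smul_eq_zero_iff⟩ :=
    exists_periodicClass_generators_truncated hn
  have extEval_eq_zero_iff (m : ℕ) (q : k[X]) : extEval u t m q = 0 ↔ gradedEval n m q = 0 := by
    rw [gradedEval_eq_zero_iff]
    cases m with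
    | zero => exact extEval_zero_eq_zero_iff q
    | succ m => exact extEval_succ_eq_zero_iff (smul_eq_zero_iff m) q
  have extEval_surj (m : ℕ) : Function.Surjective (extEval u t m) := by
    refine extEval_surjective (generates m) fun s hs => ?_
    cases m with
    | zero => exact (smul_periodicClass_zero_eq_zero_iff s).2 hs
    | succ m => exact (smul_eq_zero_iff m s).2 (by rw [hs, mul_zero])
  choose e he using fun m => exists_addEquiv_of_eq_zero_iff (g := (gradedEval n m).toAddMonoidHom)
    (extEval_surj m) (gradedEval_surjective m) (extEval_eq_zero_iff m)
  replace he (m : ℕ) (q : k[X]) : e m (extEval u t m q) = gradedEval n m q := he m q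
  refine ⟨e, ?_, fun a b α β => ?_⟩
  · rw [← extEval_zero_one (u := u) (t := t), he, coe_gradedEval_zero_one]
  · obtain ⟨p, rfl⟩ := extEval_surj a α
    obtain ⟨q, rfl⟩ := extEval_surj b β
    rw [extEval_comp huu hut, he, he, gradedEval_mul]
    split_ifs
    · rw [map_zero, ZeroMemClass.coe_zero]
    · rw [he]

/-- for a field `k` of odd prime characteristic `p` with `p ∤ n+1`, the graded ring
`HH^*(A;A) = ⊕ₘ Ext^m_B(A,A)` with the Yoneda (composition) product is isomorphic as a
graded ring to `k[x,u,t]/(x^{n+1}, u², xⁿt, uxⁿ)` with `x, u, t` in degrees `0, 1, 2`. -/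
theorem stmt9 (k : Type) [Field k] (p : ℕ) (hp : p.Prime) (hp2 : p ≠ 2) [CharP k p]
    (n : ℕ) (hn : 1 ≤ n) (hpn : ¬ p ∣ (n + 1)) :
    ∃ e : ∀ m : ℕ, Abelian.Ext (M k n) (M k n) m ≃+ G k n m,
      ((e 0 (Abelian.Ext.mk₀ (𝟙 (M k n))) : R k n) = 1) ∧
      ∀ (a b : ℕ) (α : Abelian.Ext (M k n) (M k n) a) (β : Abelian.Ext (M k n) (M k n) b),
        ((e (a + b) (α.comp β rfl) : R k n) = (e a α : R k n) * (e b β : R k n)) :=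
  stmt9_general k n fun h => hpn ((CharP.cast_eq_zero_iff k p (n + 1)).1 (by exact_mod_cast h))

end
end
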